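/- For every prime power q with q ≡ 3 (mod 4), |σ(q) − 25·(2⁻¹¹ + 2⁻¹⁶)·q²| < 138·q^{3/2} + 235·q. -/

import Mathlib

open scoped Classical

noncomputable section

/-- The operation of the quasigroup `Q_{a,b}`:
`u*v = u + a(v-u)` if `v-u` is a square, `u*v = u + b(v-u)` otherwise. -/
def qop {F : Type*} [Field F] (a b u v : F) : F :=
  if IsSquare (v - u) then u + a * (v - u) else u + b * (v - u)

/-- The set `Σ(F)` of pairs `(a,b)` with `a ≠ b`, `a,b ∉ {0,1}`, and
`ab` and `(1-a)(1-b)` both squares. -/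
def SigSet (F : Type*) [Field F] : Set (F × F) :=
  {p | p.1 ≠ p.2 ∧ p.1 ≠ 0 ∧ p.1 ≠ 1 ∧ p.2 ≠ 0 ∧ p.2 ≠ 1 ∧
    IsSquare (p.1 * p.2) ∧ IsSquare ((1 - p.1) * (1 - p.2))}

/-- `Q_{a,b}` is maximally nonassociative. -/
def MaxNA {F : Type*} [Field F] (a b : F) : Prop :=
  ∀ u v w : F, qop a b (qop a b u v) w = qop a b u (qop a b v w) → u = v ∧ v = w

/-- `σ(q)`: the number of pairs `(a,b) ∈ Σ` for which `Q_{a,b}` is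
maximally nonassociative. -/
def sigmaCount (F : Type*) [Field F] : ℕ :=
  Set.ncard {p : F × F | p ∈ SigSet F ∧ MaxNA p.1 p.2}

/-!
Writing `x = a / b` and `y = (1 - a) / (1 - b)`, the pairs in `Σ` correspond to pairs of squares `x,
y`, and after normalising `u = 0` an associative triple of `Q_{a,b}` is determined up to scaling by
the squareness of the four differences at which the operation is evaluated. Whether such a pattern
occurs depends only on the quadratic characters of fifteen explicit polynomials in `x` and `y`. The
indicator of maximal nonassociativity is therefore a polynomial in these characters. For all but
boundedly many `x` the polynomials are, in `y`, pairwise coprime and not constant multiples of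
squares, so summing over `y` and bounding every nonconstant monomial by Stepanov's method leaves
only the constant coefficient `825 / 32768`. Half of the field elements `x` are squares, and `825 /
65536 = 25 * (2⁻¹¹ + 2⁻¹⁶)`.
-/

open Polynomial

section Polynomials

variable {K : Type*} [Field K]

lemma mul_mem_degreeLT {p : K[X]} {m : ℕ} (hp : p ∈ degreeLT K m) (r : K[X]) :
    p * r ∈ degreeLT K (m + r.natDegree) := by
  rcases eq_or_ne p 0 with rfl | hp0
  · simp
  rw [mem_degreeLT, ← natDegree_lt_iff_degree_lt hp0] at hp
  rw [mem_degreeLT]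
  refine degree_le_natDegree.trans_lt (Nat.cast_lt.2 ?_)
  exact natDegree_mul_le.trans_lt (Nat.add_lt_add_right hp _)

lemma hasseDeriv_mem_degreeLT {p : K[X]} {m : ℕ} (hp : p ∈ degreeLT K m) (l : ℕ) :
    hasseDeriv l p ∈ degreeLT K (m - l) := by
  rcases eq_or_ne (hasseDeriv l p) 0 with h0 | h0
  · simp [h0]
  have hl : l ≤ p.natDegree := by
    contrapose! h0
    exact hasseDeriv_eq_zero_of_lt_natDegree p l h0
  have hp0 : p ≠ 0 := by
    rintro rfl
    simp at h0
  rw [mem_degreeLT, ← natDegree_lt_iff_degree_lt hp0] at hp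
  rw [mem_degreeLT, ← natDegree_lt_iff_degree_lt h0]
  have := natDegree_hasseDeriv_le p l
  omega

lemma mem_map_mulLeft_degreeLT {f g : K[X]} {m : ℕ} (hf : f ≠ 0) (hdvd : f ∣ g)
    (hg : g ∈ degreeLT K (m + f.natDegree)) :
    g ∈ (degreeLT K m).map (LinearMap.mulLeft K f) := by
  obtain ⟨t, rfl⟩ := hdvd
  refine ⟨t, ?_, rfl⟩
  rcases eq_or_ne t 0 with rfl | ht
  · exact Submodule.zero_mem _
  rw [mem_degreeLT, ← natDegree_lt_iff_degree_lt (mul_ne_zero hf ht), natDegree_mul hf ht] at hg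
  refine mem_degreeLT.2 ((natDegree_lt_iff_degree_lt ht).1 ?_)
  omega

lemma finrank_degreeLT (m : ℕ) : Module.finrank K (degreeLT K m) = m := by
  rw [(degreeLTEquiv K m).finrank_eq, Module.finrank_fin_fun]

lemma exists_ne_zero_forall_apply_eq_zero {V E : Type*} [AddCommGroup V] [Module K V]
    [AddCommGroup E] [Module K E] {M : ℕ} (L : ℕ → V →ₗ[K] E) (W : ℕ → Submodule K E)
    [∀ l, Module.Finite K (W l)] (hLW : ∀ l < M, ∀ v, L l v ∈ W l)
    (hdim : ∑ l ∈ Finset.range M, Module.finrank K (W l) < Module.finrank K V) :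
    ∃ v ≠ 0, ∀ l < M, L l v = 0 := by
  let T : V →ₗ[K] ((l : Fin M) → W l) :=
    LinearMap.pi fun l => (L l).codRestrict (W l) (hLW l l.2)
  have : Module.Finite K V := Module.finite_of_finrank_pos (Nat.zero_lt_of_lt hdim)
  have hker : T.ker ≠ ⊥ := by
    apply LinearMap.ker_ne_bot_of_finrank_lt
    rwa [Module.finrank_pi_fintype,
      Fin.sum_univ_eq_sum_range (fun l => Module.finrank K (W l)) M]
  obtain ⟨v, hv, hv0⟩ := Submodule.exists_mem_ne_zero_of_ne_bot hker
  exact ⟨v, hv0, fun l hl => congrArg Subtype.val (congrFun (LinearMap.mem_ker.1 hv) ⟨l, hl⟩)⟩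

lemma card_mul_le_natDegree_of_pow_dvd {R : K[X]} (hR : R ≠ 0) {M : ℕ} (s : Finset K)
    (h : ∀ x ∈ s, (X - C x) ^ M ∣ R) : s.card * M ≤ R.natDegree := by
  have hprod : ∏ x ∈ s, (X - C x) ^ M ∣ R :=
    Finset.prod_dvd_of_coprime (fun a _ b _ hab =>
      (pairwise_coprime_X_sub_C (s := (id : K → K)) Function.injective_id hab).pow) h
  calc s.card * M = (∏ x ∈ s, (X - C x) ^ M).natDegree := by
        rw [natDegree_prod _ _ fun x _ => pow_ne_zero _ (X_sub_C_ne_zero x)]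
        simp [natDegree_pow]
    _ ≤ R.natDegree := natDegree_le_of_dvd hprod hR

lemma pow_sub_dvd_hasseDeriv_pow_mul (f s : K[X]) (n l : ℕ) :
    f ^ (n - l) ∣ hasseDeriv l (f ^ n * s) := by
  induction n generalizing l with
  | zero => simp
  | succ n ih =>
    rw [pow_succ', mul_assoc, hasseDeriv_mul]
    refine Finset.dvd_sum ?_
    rintro ⟨i, j⟩ hij
    rw [Finset.HasAntidiagonal.mem_antidiagonal] at hij
    dsimp only at hij ⊢
    rcases Nat.eq_zero_or_pos i with rfl | hi
    · rw [hasseDeriv_zero, LinearMap.id_apply]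
      refine (pow_dvd_pow f (by omega : n + 1 - l ≤ n - j + 1)).trans ?_
      rw [pow_succ']
      exact mul_dvd_mul_left f (ih j)
    · exact ((pow_dvd_pow f (by omega : n + 1 - l ≤ n - j)).trans (ih j)).mul_left _

/-- The linear conditions of Stepanov's method: modulo `f ^ n = e` and `X ^ q = X`, the `l`-th
Hasse derivative of `∑ j, (r j + f ^ n * s j) * X ^ (j * q)`, multiplied by `f ^ n`, becomes this
polynomial (up to the factor `e`), whose degree is small. -/
def reducedHasseDeriv (f : K[X]) (n J B : ℕ) (e : K) (l : ℕ) :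
    (Fin J → degreeLT K B) × (Fin J → degreeLT K B) →ₗ[K] K[X] where
  toFun v := ∑ j, (f ^ n * hasseDeriv l (v.1 j : K[X]) +
    C e * hasseDeriv l (f ^ n * (v.2 j : K[X]))) * X ^ (j : ℕ)
  map_add' u v := by
    rw [← Finset.sum_add_distrib]
    refine Finset.sum_congr rfl fun j _ => ?_
    simp only [Prod.fst_add, Prod.snd_add, Pi.add_apply, Submodule.coe_add, mul_add, map_add]
    ring
  map_smul' c v := by
    rw [RingHom.id_apply, Finset.smul_sum]
    refine Finset.sum_congr rfl fun j _ => ?_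
    simp only [Prod.smul_fst, Prod.smul_snd, Pi.smul_apply, Submodule.coe_smul, mul_smul_comm,
      map_smul, ← smul_add, smul_mul_assoc]

lemma reducedHasseDeriv_apply (f : K[X]) (n J B : ℕ) (e : K) (l : ℕ)
    (v : (Fin J → degreeLT K B) × (Fin J → degreeLT K B)) :
    reducedHasseDeriv f n J B e l v =
      ∑ j, (f ^ n * hasseDeriv l (v.1 j : K[X]) + C e * hasseDeriv l (f ^ n * (v.2 j : K[X]))) *
        X ^ (j : ℕ) :=
  rfl

lemma reducedHasseDeriv_mem {f : K[X]} (hf : f ≠ 0) {n J B : ℕ} (e : K) {l : ℕ} (hln : l ≤ n)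
    (hlB : l ≤ B) (v : (Fin J → degreeLT K B) × (Fin J → degreeLT K B)) :
    reducedHasseDeriv f n J B e l v ∈
      (degreeLT K (B - l + l * f.natDegree + J)).map (LinearMap.mulLeft K (f ^ (n - l))) := by
  rw [reducedHasseDeriv_apply]
  refine Submodule.sum_mem _ fun j _ => ?_
  have hj := j.2
  have hsplit : (n - l) * f.natDegree + l * f.natDegree = n * f.natDegree := by
    rw [← add_mul, Nat.sub_add_cancel hln]
  refine mem_map_mulLeft_degreeLT (pow_ne_zero _ hf) ?_ ?_
  · exact (dvd_add ((pow_dvd_pow f (Nat.sub_le n l)).mul_right _)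
      ((pow_sub_dvd_hasseDeriv_pow_mul f _ n l).mul_left _)).mul_right _
  have hr : f ^ n * hasseDeriv l (v.1 j : K[X]) ∈ degreeLT K (B - l + n * f.natDegree) := by
    rw [mul_comm (f ^ n), ← natDegree_pow]
    exact mul_mem_degreeLT (hasseDeriv_mem_degreeLT (v.1 j).2 l) _
  have hs : C e * hasseDeriv l (f ^ n * (v.2 j : K[X])) ∈
      degreeLT K (B - l + n * f.natDegree) := by
    rw [← smul_eq_C_mul, mul_comm (f ^ n), ← Nat.sub_add_comm hlB, ← natDegree_pow]
    exact Submodule.smul_mem _ _ (hasseDeriv_mem_degreeLT (mul_mem_degreeLT (v.2 j).2 _) l)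
  refine degreeLT_mono ?_ (mul_mem_degreeLT (Submodule.add_mem _ hr hs) (X ^ (j : ℕ)))
  rw [natDegree_X_pow, natDegree_pow]
  omega

lemma eq_zero_of_sq_mul_eq_C_mul_sq {f : K[X]}
    (hsq : ∀ (c : K) (g : K[X]), f ≠ C c * g ^ 2) {r s : K[X]} {c : K} (hc : c ≠ 0)
    (h : r ^ 2 * f = C c * s ^ 2) : r = 0 ∧ s = 0 := by
  have hCc : IsUnit (C c) := isUnit_C.2 hc.isUnit
  have hr : r = 0 := by
    by_contra hr
    have hdvd : r ^ 2 ∣ s ^ 2 := (hCc.dvd_mul_left).1 ⟨f, h.symm⟩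
    obtain ⟨g, rfl⟩ := (UniqueFactorizationMonoid.pow_dvd_pow_iff_dvd two_ne_zero).1 hdvd
    refine hsq c g (mul_left_cancel₀ (pow_ne_zero 2 hr) ?_)
    rw [h]
    ring
  subst hr
  rw [zero_pow two_ne_zero, zero_mul, eq_comm] at h
  exact ⟨rfl, pow_eq_zero_iff two_ne_zero |>.1 ((mul_eq_zero.1 h).resolve_left hCc.ne_zero)⟩

lemma eq_zero_of_sum_mul_X_pow_eq_zero (m : ℕ) {J : ℕ} (u : Fin J → K[X])
    (hu : ∀ j, X ^ m ∣ u j → u j = 0) (hsum : ∑ j, u j * X ^ ((j : ℕ) * m) = 0) (j : Fin J) :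
    u j = 0 := by
  induction J with
  | zero => exact j.elim0
  | succ J ih =>
    have hstep : ∑ j : Fin J, u j.succ * X ^ ((j.succ : ℕ) * m) =
        X ^ m * ∑ j : Fin J, u j.succ * X ^ ((j : ℕ) * m) := by
      rw [Finset.mul_sum]
      refine Finset.sum_congr rfl fun j _ => ?_
      rw [Fin.val_succ, add_one_mul, pow_add]
      ring
    rw [Fin.sum_univ_succ, hstep, Fin.val_zero, zero_mul, pow_zero, mul_one] at hsum
    have hzero : u 0 = 0 := hu 0 ⟨_, by rw [eq_neg_of_add_eq_zero_left hsum, ← mul_neg]⟩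
    rw [hzero, zero_add] at hsum
    have htail := (mul_eq_zero.1 hsum).resolve_left (pow_ne_zero m X_ne_zero)
    exact Fin.cases hzero (ih (fun j => u j.succ) (fun j => hu j.succ) htail) j

end Polynomials

section Stepanov

variable {F : Type*} [Field F] [Fintype F]

lemma X_pow_card_dvd_pow_card_sub_C (f : F[X]) :
    X ^ Fintype.card F ∣ f ^ Fintype.card F - C (f.eval 0) := by
  have hX : X ∣ f - C (f.eval 0) := by
    rw [X_dvd_iff, coeff_sub, coeff_C_zero, coeff_zero_eq_eval_zero, sub_self]
  have := map_dvd (expand F (Fintype.card F)) hX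
  rwa [expand_X, map_sub, FiniteField.expand_card, expand_C] at this

/-- The Taylor expansion of `X ^ q` at `x` is `X ^ q + C x`, so below order `q` it is constant. -/
lemma eval_hasseDeriv_mul_X_pow_mul_card (g : F[X]) (j : ℕ) {l : ℕ} (hl : l < Fintype.card F)
    (x : F) :
    (hasseDeriv l (g * X ^ (j * Fintype.card F))).eval x = (hasseDeriv l g).eval x * x ^ j := by
  have htaylor : X ^ Fintype.card F ∣ taylor x (X ^ (j * Fintype.card F)) - C (x ^ j) := by
    have := X_pow_card_dvd_pow_card_sub_C ((X + C x : F[X]) ^ j)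
    rw [eval_pow, eval_add, eval_X, eval_C, zero_add, ← pow_mul] at this
    rwa [taylor_apply, X_pow_comp]
  obtain ⟨t, ht⟩ := htaylor
  rw [← taylor_coeff, ← taylor_coeff, taylor_mul, sub_eq_iff_eq_add.1 ht, mul_add, coeff_add,
    coeff_mul_C, X_pow_dvd_iff.1 (dvd_mul_of_dvd_right (dvd_mul_right _ t) (taylor x g)) l hl,
    zero_add]

/-- Squaring `r ≡ -f ^ n * s` turns `f ^ (2 * n)` into `f ^ (q - 1)`, and `f ^ q` is constant
modulo `X ^ q`, so that `r ^ 2 * f ≡ f(0) * s ^ 2` is an equality by degrees. -/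
lemma eq_zero_of_X_pow_card_dvd_add {f : F[X]} (hsq : ∀ (c : F) (g : F[X]), f ≠ C c * g ^ 2)
    (h0 : f.eval 0 ≠ 0) {n B : ℕ} (hn : Fintype.card F = 2 * n + 1)
    (hB : 2 * B + f.natDegree ≤ Fintype.card F + 1) {r s : F[X]} (hr : r ∈ degreeLT F B)
    (hs : s ∈ degreeLT F B) (hdvd : X ^ Fintype.card F ∣ r + f ^ n * s) : r = 0 ∧ s = 0 := by
  have hdiff : X ^ Fintype.card F ∣ r ^ 2 * f - C (f.eval 0) * s ^ 2 := by
    have hsum : r ^ 2 * f - C (f.eval 0) * s ^ 2 = (r + f ^ n * s) * (f * (r - f ^ n * s)) +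
        (f ^ Fintype.card F - C (f.eval 0)) * s ^ 2 := by
      rw [hn]
      ring
    rw [hsum]
    exact dvd_add (hdvd.mul_right _) ((X_pow_card_dvd_pow_card_sub_C f).mul_right _)
  have sq_mem : ∀ {t : F[X]}, t ∈ degreeLT F B → ∀ g : F[X], g.natDegree ≤ f.natDegree →
      t ^ 2 * g ∈ degreeLT F (Fintype.card F) := by
    intro t ht g hg
    rcases eq_or_ne t 0 with rfl | ht0
    · simp
    have htB : t.natDegree < B := (natDegree_lt_iff_degree_lt ht0).2 (mem_degreeLT.1 ht)
    rw [sq, mul_assoc]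
    refine degreeLT_mono ?_ (mul_mem_degreeLT ht (t * g))
    have := natDegree_mul_le (p := t) (q := g)
    omega
  refine eq_zero_of_sq_mul_eq_C_mul_sq hsq h0 (sub_eq_zero.1 ?_)
  refine eq_zero_of_dvd_of_degree_lt hdiff ?_
  rw [degree_X_pow, ← mem_degreeLT]
  refine Submodule.sub_mem _ (sq_mem hr f le_rfl) ?_
  rw [mul_comm]
  exact sq_mem hs _ (by simp)

/-- Stepanov's auxiliary polynomial: it vanishes to order `M` at the points with `f ^ n = e`. -/
lemma exists_stepanov_polynomial {f : F[X]} (hf : f ≠ 0) {n J B M : ℕ} {e : F} (he : e ≠ 0)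
    (hMn : M ≤ n) (hMB : M ≤ B) (hMq : M ≤ Fintype.card F)
    (hcount : ∑ l ∈ Finset.range M, (B - l + l * f.natDegree + J) < 2 * J * B) :
    ∃ v : (Fin J → degreeLT F B) × (Fin J → degreeLT F B), v ≠ 0 ∧
      ∀ x : F, f.eval x ^ n = e → (X - C x) ^ M ∣
        ∑ j, ((v.1 j : F[X]) + f ^ n * (v.2 j : F[X])) * X ^ ((j : ℕ) * Fintype.card F) := by
  obtain ⟨v, hv, hvanish⟩ := exists_ne_zero_forall_apply_eq_zero (M := M)
    (reducedHasseDeriv f n J B e)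
    (fun l => (degreeLT F (B - l + l * f.natDegree + J)).map (LinearMap.mulLeft F (f ^ (n - l))))
    (fun l hl v => reducedHasseDeriv_mem hf e (hl.le.trans hMn) (hl.le.trans hMB) v) (by
      refine (Finset.sum_le_sum fun l _ => (Submodule.finrank_map_le _ _).trans_eq
        (finrank_degreeLT _)).trans_lt (hcount.trans_eq ?_)
      simp only [Module.finrank_prod, Module.finrank_pi_fintype, finrank_degreeLT,
        Finset.sum_const, Finset.card_univ, Fintype.card_fin, smul_eq_mul]
      ring)
  refine ⟨v, hv, fun x hx => ?_⟩
  rw [X_sub_C_pow_dvd_iff, ← taylor_apply, X_pow_dvd_iff]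
  intro l hl
  rw [taylor_coeff, map_sum, eval_finsetSum]
  simp only [eval_hasseDeriv_mul_X_pow_mul_card _ _ (hl.trans_le hMq)]
  have hvan := congrArg (eval x) (hvanish l hl)
  refine (mul_eq_zero.1 (?_ : e * _ = 0)).resolve_left he
  rw [eval_zero, reducedHasseDeriv_apply, eval_finsetSum] at hvan
  rw [← hvan, Finset.mul_sum]
  refine Finset.sum_congr rfl fun j _ => ?_
  simp only [eval_mul, eval_add, eval_pow, eval_X, eval_C, hx, map_add]
  ring

theorem card_pow_eval_eq_mul_le {f : F[X]} (hsq : ∀ (c : F) (g : F[X]), f ≠ C c * g ^ 2)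
    (h0 : f.eval 0 ≠ 0) {n J B M : ℕ} {e : F} (he : e ≠ 0) (hn : Fintype.card F = 2 * n + 1)
    (hB : 2 * B + f.natDegree ≤ Fintype.card F + 1) (hMn : M ≤ n) (hMB : M ≤ B)
    (hcount : ∑ l ∈ Finset.range M, (B - l + l * f.natDegree + J) < 2 * J * B) :
    (Finset.univ.filter fun x : F => f.eval x ^ n = e).card * M ≤
      B + n * f.natDegree + (J - 1) * Fintype.card F := by
  have hf : f ≠ 0 := by simpa using hsq 0 0
  obtain ⟨v, hv, hdvd⟩ := exists_stepanov_polynomial hf he hMn hMB (by omega) hcount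
  set R : F[X] := ∑ j, ((v.1 j : F[X]) + f ^ n * (v.2 j : F[X])) *
    X ^ ((j : ℕ) * Fintype.card F)
  have hR0 : R ≠ 0 := by
    intro hR0
    have hterm : ∀ j, X ^ Fintype.card F ∣ (v.1 j : F[X]) + f ^ n * (v.2 j : F[X]) →
        (v.1 j : F[X]) = 0 ∧ (v.2 j : F[X]) = 0 := fun j =>
      eq_zero_of_X_pow_card_dvd_add hsq h0 hn hB (v.1 j).2 (v.2 j).2
    have hzero := eq_zero_of_sum_mul_X_pow_eq_zero (Fintype.card F) _
      (fun j hj => by rw [(hterm j hj).1, (hterm j hj).2, mul_zero, add_zero]) hR0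
    have hpair := fun j => hterm j (by rw [hzero j]; exact dvd_zero _)
    exact hv (Prod.ext (funext fun j => Subtype.ext (hpair j).1)
      (funext fun j => Subtype.ext (hpair j).2))
  refine (card_mul_le_natDegree_of_pow_dvd hR0 _ fun x hx =>
    hdvd x (Finset.mem_filter.1 hx).2).trans ?_
  refine natDegree_sum_le_of_forall_le _ _ fun j _ => natDegree_mul_le.trans ?_
  have natDegree_le : ∀ t : degreeLT F B, (t : F[X]).natDegree ≤ B := fun t =>
    natDegree_le_of_degree_le (mem_degreeLT.1 t.2).le
  have hj : (j : ℕ) ≤ J - 1 := Nat.le_sub_one_of_lt j.2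
  rw [natDegree_X_pow]
  gcongr
  refine (natDegree_add_le _ _).trans (max_le ((natDegree_le _).trans (Nat.le_add_right _ _)) ?_)
  refine natDegree_mul_le.trans ?_
  rw [natDegree_pow, add_comm]
  gcongr
  exact natDegree_le _

end Stepanov

section CharacterSums

variable {F : Type*} [Field F] [Fintype F]

/-- The parameters `M`, `J = (M + d + 2) / 2` and `B = (q + 1 - d) / 2` leave more unknowns than
equations, since `M ^ 2 ≤ q`. -/
lemma sum_conditions_lt {q d M : ℕ} (hd : 1 ≤ d) (hM : 2 * d + 3 ≤ M) (hMq : M * M ≤ q) :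
    ∑ l ∈ Finset.range M, ((q + 1 - d) / 2 - l + l * d + (M + d + 2) / 2) <
      2 * ((M + d + 2) / 2) * ((q + 1 - d) / 2) := by
  obtain ⟨d, rfl⟩ := Nat.exists_eq_add_of_le' hd
  set B := (q + 1 - (d + 1)) / 2 with hB
  set J := (M + (d + 1) + 2) / 2 with hJ
  have hMB : M ≤ B := by
    have : 2 * M + (d + 1) ≤ M * M := by nlinarith
    omega
  have hsum : ∑ l ∈ Finset.range M, (B - l + l * (d + 1) + J) =
      M * B + (∑ l ∈ Finset.range M, l) * d + M * J := by
    have hterm : ∀ l ∈ Finset.range M, B - l + l * (d + 1) + J = B + l * d + J := by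
      intro l hl
      have := (Finset.mem_range.1 hl).le.trans hMB
      rw [mul_add_one]
      omega
    rw [Finset.sum_congr rfl hterm, Finset.sum_add_distrib, Finset.sum_add_distrib,
      ← Finset.sum_mul]
    simp only [Finset.sum_const, Finset.card_range, smul_eq_mul]
  have htri : 2 * ∑ l ∈ Finset.range M, l + M = M * M := by
    rw [mul_comm, Finset.sum_range_id_mul_two, Nat.mul_sub_one,
      Nat.sub_add_cancel (Nat.le_mul_self M)]
  have hB1 : q ≤ 2 * B + (d + 1) := by omega
  have hJ1 : M + d + 2 ≤ 2 * J := by omega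
  have hJ2 : 2 * J ≤ M + d + 3 := by omega
  nlinarith [Nat.mul_le_mul_right (2 * B) hJ1, Nat.mul_le_mul_left M hJ2,
    Nat.mul_le_mul_left (d + 2) hB1, Nat.mul_le_mul_left d hMq]

lemma two_mul_card_pow_eval_eq_mul_le {f : F[X]} (hsq : ∀ (c : F) (g : F[X]), f ≠ C c * g ^ 2)
    (h0 : f.eval 0 ≠ 0) (hd : 1 ≤ f.natDegree) {n M : ℕ} (hn : Fintype.card F = 2 * n + 1)
    (hM : 2 * f.natDegree + 3 ≤ M) (hMq : M * M ≤ Fintype.card F) {e : F} (he : e ≠ 0) :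
    2 * (Finset.univ.filter fun x : F => f.eval x ^ n = e).card * M ≤
      (M + 2 * f.natDegree + 1) * Fintype.card F := by
  have hMM : 2 * M + f.natDegree + 2 ≤ M * M := by nlinarith
  have hcard := card_pow_eval_eq_mul_le hsq h0 he hn (by omega) (by omega) (by omega)
    (sum_conditions_lt hd hM hMq)
  have hB : 2 * ((Fintype.card F + 1 - f.natDegree) / 2) ≤ Fintype.card F := by omega
  have hn' : 2 * n ≤ Fintype.card F := by omega
  have hJ : 2 * ((M + f.natDegree + 2) / 2 - 1) ≤ M + f.natDegree := by omega
  nlinarith [Nat.mul_le_mul_right f.natDegree hn', Nat.mul_le_mul_right (Fintype.card F) hJ]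

lemma mul_quadraticChar_add_one {n : ℕ} (hn : Fintype.card F = 2 * n + 1) {e : ℤ}
    (he : e = 1 ∨ e = -1) (z : F) :
    e * quadraticChar F z + 1 = 2 * (if z ^ n = e then 1 else 0) + if z = 0 then 1 else 0 := by
  have hchar : ringChar F ≠ 2 := fun h => by
    have := FiniteField.even_card_of_char_two h
    omega
  have hhalf : Fintype.card F / 2 = n := by omega
  have hn0 : n ≠ 0 := by
    have := Fintype.one_lt_card (α := F)
    omega
  have hneg : (-1 : F) ≠ 1 := Ring.neg_one_ne_one_of_char_ne_two hchar
  rcases eq_or_ne z 0 with rfl | hz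
  · rcases he with rfl | rfl <;> simp [hn0]
  · rw [quadraticChar_eq_pow_of_char_ne_two hchar hz, hhalf]
    have := FiniteField.pow_dichotomy hchar hz
    rw [hhalf] at this
    rcases he with rfl | rfl <;> rcases this with h | h <;> simp [h, hz, hneg, hneg.symm]

lemma mul_sum_quadraticChar_eval_mul_le {f : F[X]} (hsq : ∀ (c : F) (g : F[X]), f ≠ C c * g ^ 2)
    (h0 : f.eval 0 ≠ 0) (hd : 1 ≤ f.natDegree) (hchar : ringChar F ≠ 2) {M : ℕ}
    (hM : 2 * f.natDegree + 3 ≤ M) (hMq : M * M ≤ Fintype.card F) {e : ℤ} (he : e = 1 ∨ e = -1) :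
    e * (∑ x, quadraticChar F (f.eval x)) * M ≤
      (2 * f.natDegree + 1) * Fintype.card F + f.natDegree * M := by
  have hf : f ≠ 0 := by simpa using hsq 0 0
  obtain ⟨n, hn⟩ : ∃ n, Fintype.card F = 2 * n + 1 :=
    ⟨Fintype.card F / 2, by have := FiniteField.odd_card_of_char_ne_two hchar; omega⟩
  have hsum : e * (∑ x, quadraticChar F (f.eval x)) + Fintype.card F =
      2 * (Finset.univ.filter fun x : F => f.eval x ^ n = e).card +
        (Finset.univ.filter fun x : F => f.eval x = 0).card := by
    have := Finset.sum_congr rfl fun x (_ : x ∈ Finset.univ) =>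
      mul_quadraticChar_add_one hn he (f.eval x)
    simpa only [Finset.sum_add_distrib, ← Finset.mul_sum, Finset.sum_boole, Finset.sum_const,
      Finset.card_univ, nsmul_one, Nat.cast_ofNat] using this
  have hroots : (Finset.univ.filter fun x : F => f.eval x = 0).card ≤ f.natDegree := by
    refine card_le_degree_of_subset_roots fun x hx => ?_
    rw [mem_roots hf]
    exact (Finset.mem_filter.1 hx).2
  have he0 : (e : F) ≠ 0 := by rcases he with rfl | rfl <;> simp
  have hcard := two_mul_card_pow_eval_eq_mul_le hsq h0 hd hn hM hMq he0
  zify at hroots hcard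
  rw [eq_sub_of_add_eq hsum]
  nlinarith [mul_le_mul_of_nonneg_right hroots (Int.natCast_nonneg M)]

lemma abs_sum_quadraticChar_eval_le_card (f : F[X]) :
    |((∑ x, quadraticChar F (f.eval x) : ℤ) : ℝ)| ≤ Fintype.card F := by
  have hterm : ∀ x : F, |quadraticChar F (f.eval x)| ≤ 1 := fun x => by
    rcases eq_or_ne (f.eval x) 0 with h | h
    · simp [h]
    · rcases quadraticChar_dichotomy h with h | h <;> simp [h]
  have := (Finset.abs_sum_le_sum_abs _ _).trans
    (Finset.sum_le_sum fun x (_ : x ∈ Finset.univ) => hterm x)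
  rw [Finset.sum_const, Finset.card_univ, nsmul_one] at this
  exact_mod_cast this

lemma abs_sum_quadraticChar_eval_le_of_eval_zero_ne_zero {f : F[X]}
    (hsq : ∀ (c : F) (g : F[X]), f ≠ C c * g ^ 2) (h0 : f.eval 0 ≠ 0) (hchar : ringChar F ≠ 2) :
    |((∑ x, quadraticChar F (f.eval x) : ℤ) : ℝ)| ≤
      (2 * f.natDegree + 3) * √(Fintype.card F) := by
  set q := Fintype.card F
  set d := f.natDegree
  set s := √(q : ℝ)
  have hss : s * s = q := Real.mul_self_sqrt q.cast_nonneg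
  rcases le_or_gt s (2 * d + 3) with hs | hs
  · refine (abs_sum_quadraticChar_eval_le_card f).trans ?_
    rw [← hss]
    gcongr
  set S := ∑ x, quadraticChar F (f.eval x)
  set M := Nat.sqrt q
  have hMs : (M : ℝ) ≤ s := Real.nat_sqrt_le_real_sqrt
  have hsM : s < M + 1 := Real.real_sqrt_lt_nat_sqrt_succ
  have hM : 2 * d + 3 ≤ M := Nat.lt_succ_iff.1 (by exact_mod_cast hs.trans hsM)
  have hdeg : 1 ≤ d := by
    by_contra! hdeg
    refine hsq (f.coeff 0) 1 ?_
    rw [one_pow, mul_one]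
    exact eq_C_of_natDegree_eq_zero (by omega)
  have hbound : ∀ e : ℤ, e = 1 ∨ e = -1 →
      (e : ℝ) * S * M ≤ (2 * d + 1) * q + d * M := fun e he => by
    exact_mod_cast mul_sum_quadraticChar_eval_mul_le hsq h0 hdeg hchar hM (Nat.sqrt_le q) he
  have hM0 : (0 : ℝ) < M := by exact_mod_cast (by omega : 0 < M)
  have habs : |(S : ℝ)| * M ≤ (2 * d + 1) * q + d * M := by
    rcases abs_choice (S : ℝ) with h | h <;> rw [h]
    · simpa using hbound 1 (Or.inl rfl)
    · simpa using hbound (-1) (Or.inr rfl)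
  refine le_of_mul_le_mul_right (habs.trans ?_) hM0
  calc (2 * d + 1) * (q : ℝ) + d * M ≤ (2 * d + 1) * (s * s) + d * s := by rw [hss]; gcongr
    _ ≤ (2 * d + 3) * s * (s - 1) := by nlinarith
    _ ≤ (2 * d + 3) * s * M := by gcongr; linarith

/-- A weak form of Weil's bound. -/
theorem abs_sum_quadraticChar_eval_le {f : F[X]} (hsq : ∀ (c : F) (g : F[X]), f ≠ C c * g ^ 2)
    (hchar : ringChar F ≠ 2) :
    |((∑ x, quadraticChar F (f.eval x) : ℤ) : ℝ)| ≤
      (2 * f.natDegree + 3) * √(Fintype.card F) := by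
  by_cases hzero : ∀ a, f.eval a = 0
  · simp only [hzero, quadraticChar_zero, Finset.sum_const_zero, Int.cast_zero, abs_zero]
    positivity
  push Not at hzero
  obtain ⟨a, ha⟩ := hzero
  have hsq' : ∀ (c : F) (g : F[X]), taylor a f ≠ C c * g ^ 2 := by
    intro c g h
    refine hsq c (taylor (-a) g) (taylor_injective a ?_)
    rw [h, taylor_mul, taylor_pow, taylor_C, taylor_taylor, add_neg_cancel, taylor_zero]
  have hshift : ∑ x, quadraticChar F ((taylor a f).eval x) = ∑ x, quadraticChar F (f.eval x) :=
    Fintype.sum_equiv (Equiv.addRight a) _ _ fun x => by rw [taylor_eval, Equiv.coe_addRight]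
  have := abs_sum_quadraticChar_eval_le_of_eval_zero_ne_zero hsq'
    (by rwa [taylor_eval, zero_add]) hchar
  rwa [hshift, natDegree_taylor] at this

end CharacterSums

section Coprimality

variable {K : Type*} [Field K]

lemma isCoprime_of_add_eq_C {p q u v : K[X]} {r : K} (hr : r ≠ 0) (h : u * p + v * q = C r) :
    IsCoprime p q :=
  ⟨C r⁻¹ * u, C r⁻¹ * v, by
    rw [mul_assoc, mul_assoc, ← mul_add, h, ← C_mul, inv_mul_cancel₀ hr, C_1]⟩

lemma isCoprime_linear {b c b' c' : K} (h : b * c' - b' * c ≠ 0) :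
    IsCoprime (C b * X + C c) (C b' * X + C c') := by
  refine isCoprime_of_add_eq_C (u := -C b') (v := C b) h ?_
  simp only [C_sub, C_mul]
  ring

lemma isCoprime_quadratic {a b c a' b' c' : K}
    (h : (a * c' - a' * c) ^ 2 - (a * b' - a' * b) * (b * c' - b' * c) ≠ 0) :
    IsCoprime (C a * X ^ 2 + C b * X + C c) (C a' * X ^ 2 + C b' * X + C c') := by
  set D := C (a * b' - a' * b)
  set E := C (a * c' - a' * c)
  refine isCoprime_of_add_eq_C (u := D * C b' + (D * X - E) * C a')
    (v := -D * C b - (D * X - E) * C a) h ?_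
  simp only [D, E, C_sub, C_mul, C_pow]
  ring

lemma squarefree_quadratic {a b c : K} (h : b ^ 2 - 4 * a * c ≠ 0) :
    Squarefree (C a * X ^ 2 + C b * X + C c) := by
  refine Separable.squarefree (isCoprime_of_add_eq_C (u := -4 * C a)
    (v := derivative (C a * X ^ 2 + C b * X + C c)) h ?_)
  simp only [derivative_add, derivative_C_mul, derivative_X_sq, derivative_X, derivative_C, C_sub,
    C_mul, C_pow, map_ofNat]
  ring

lemma not_isUnit_quadratic {a b c : K} (h : b ^ 2 - 4 * a * c ≠ 0) :
    ¬IsUnit (C a * X ^ 2 + C b * X + C c) := by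
  intro hu
  have hdeg := natDegree_eq_zero_of_isUnit hu
  have ha : a = 0 := by
    by_contra ha
    rw [natDegree_quadratic ha] at hdeg
    omega
  subst ha
  have hb : b ≠ 0 := by simpa using h
  rw [C_0, zero_mul, zero_add, natDegree_linear hb] at hdeg
  omega

lemma mul_ne_C_mul_sq_of_squarefree {p h : K[X]} (hp : Squarefree p) (hu : ¬IsUnit p)
    (hcop : IsCoprime p h) (hh : h ≠ 0) (c : K) (g : K[X]) : p * h ≠ C c * g ^ 2 := by
  intro heq
  have hc : c ≠ 0 := by
    rintro rfl
    simp [hp.ne_zero, hh] at heq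
  have hpg : p ∣ g := by
    rw [← hp.dvd_pow_iff_dvd two_ne_zero, ← ((isUnit_C.2 hc.isUnit).dvd_mul_left (a := p))]
    exact ⟨h, heq.symm⟩
  have hph : p * p ∣ p * h := by
    rw [heq, ← sq]
    exact (pow_dvd_pow_of_dvd hpg 2).mul_left _
  exact hu (hcop.isUnit_of_dvd' dvd_rfl ((mul_dvd_mul_iff_left hp.ne_zero).1 hph))

end Coprimality

/-- The fifteen polynomials in `x` and `y` whose quadratic characters decide whether the quasigroup
with parameters `x = a / b` and `y = (1 - a) / (1 - b)` is maximally nonassociative. -/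
inductive Form
  | y | d | n | g₁ | g₂ | g₃ | g₄ | h₁ | h₂ | h₃ | h₄ | k₁ | k₂ | k₃ | k₄
  deriving DecidableEq

namespace Form

instance : Fintype Form :=
  .ofList [y, d, n, g₁, g₂, g₃, g₄, h₁, h₂, h₃, h₄, k₁, k₂, k₃, k₄] (by rintro ⟨⟩ <;> simp)

section Ring

variable {R : Type*} [CommRing R]

/-- The value of a form at `(x, y)`. -/
def value (x y : R) : Form → R
  | .y => y
  | .d => x - y
  | .n => 1 - y
  | .g₁ => x - y + 1
  | .g₂ => 1 + y - x
  | .g₃ => x * y + x - y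
  | .g₄ => x * y - x + y
  | .h₁ => x ^ 2 - 2 * x * y + y
  | .h₂ => x + y ^ 2 - 2 * y
  | .h₃ => 2 * x - x ^ 2 - y
  | .h₄ => 2 * x * y - x - y ^ 2
  | .k₁ => x ^ 2 - x * y ^ 2 - x * y + y ^ 2
  | .k₂ => x ^ 2 * y - x ^ 2 + x * y - y ^ 2
  | .k₃ => x ^ 2 - x * y + y ^ 2 - y
  | .k₄ => -x ^ 2 + x * y + x - y ^ 2

/-- The coefficient of `y ^ 2` in a form. -/
def quadCoeff (x : R) : Form → R
  | .h₂ => 1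
  | .h₄ => -1
  | .k₁ => -x + 1
  | .k₂ => -1
  | .k₃ => 1
  | .k₄ => -1
  | _ => 0

/-- The coefficient of `y` in a form. -/
def linCoeff (x : R) : Form → R
  | .y => 1
  | .d => -1
  | .n => -1
  | .g₁ => -1
  | .g₂ => 1
  | .g₃ => x - 1
  | .g₄ => x + 1
  | .h₁ => -2 * x + 1
  | .h₂ => -2
  | .h₃ => -1
  | .h₄ => 2 * x
  | .k₁ => -x
  | .k₂ => x ^ 2 + x
  | .k₃ => -x - 1
  | .k₄ => x

/-- The discriminant of a form as a polynomial in `y`. -/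
def discr (x : R) (i : Form) : R :=
  linCoeff x i ^ 2 - 4 * quadCoeff x i * value x 0 i

/-- Whether a form is linear in `y`. -/
def IsLinear : Form → Bool
  | .h₂ | .h₄ | .k₁ | .k₂ | .k₃ | .k₄ => false
  | _ => true

/-- The resultant in `y` of two forms, which are regarded as quadratic unless both are linear. -/
def resultant (x : R) (i j : Form) : R :=
  if i.IsLinear && j.IsLinear then
    linCoeff x i * value x 0 j - linCoeff x j * value x 0 i
  else
    (quadCoeff x i * value x 0 j - quadCoeff x j * value x 0 i) ^ 2 -
      (quadCoeff x i * linCoeff x j - quadCoeff x j * linCoeff x i) *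
        (linCoeff x i * value x 0 j - linCoeff x j * value x 0 i)

/-- The factors, in `ℤ[x]` and up to multiplicity, of the discriminants and resultants of the
forms. -/
def degenerationFactors (x : R) : List R :=
  [-1, 2, x, x - 1, x + 1, x - 2, 2 * x - 1, x - 3, x + 3, 3 * x - 1, 3 * x + 1, 3 * x - 2,
    4 * x - 3, 2 * x - 3, 3 * x - 4, x ^ 2 + x - 1, x ^ 2 + x + 1, x ^ 2 - x + 1, x ^ 2 - x - 1,
    x ^ 2 + 1, x ^ 2 - 3 * x + 1, x ^ 2 - 3 * x + 3, x ^ 2 - 2 * x + 2, 3 * x ^ 2 - 3 * x + 1,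
    2 * x ^ 2 - 2 * x + 1, x ^ 3 + x ^ 2 - 1, x ^ 3 - x - 1, x ^ 3 - 3 * x ^ 2 + 2 * x - 1,
    x ^ 3 - 2 * x ^ 2 + x - 1, x ^ 3 - x ^ 2 + 2 * x - 1, x ^ 3 - 2 * x ^ 2 + 3 * x - 1]

/-- The factorisations of the resultants of pairs of distinct forms in their order of
declaration. -/
def resultantFactors (x : R) : Form → Form → List R
  | .y, .d => [x]
  | .y, .g₁ => [x + 1]
  | .y, .g₂ => [-1, x - 1]
  | .y, .g₃ => [x]
  | .y, .g₄ => [-1, x]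
  | .y, .h₁ => [x, x]
  | .y, .h₂ => [x]
  | .y, .h₃ => [-1, x, x - 2]
  | .y, .h₄ => [x]
  | .y, .k₁ => [-1, x, x, x - 1]
  | .y, .k₂ => [x, x]
  | .y, .k₃ => [x, x]
  | .y, .k₄ => [x, x - 1]
  | .d, .n => [x - 1]
  | .d, .g₁ => [-1]
  | .d, .g₂ => [-1]
  | .d, .g₃ => [-1, x, x]
  | .d, .g₄ => [-1, x, x]
  | .d, .h₁ => [x, x - 1]
  | .d, .h₂ => [x, x - 1]
  | .d, .h₃ => [x, x - 1]
  | .d, .h₄ => [-1, x, x - 1]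
  | .d, .k₁ => [x, x, x - 1, x - 1]
  | .d, .k₂ => [-1, x, x, x - 1]
  | .d, .k₃ => [x, x - 1]
  | .d, .k₄ => [x, x - 1]
  | .n, .g₁ => [-1, x]
  | .n, .g₂ => [x - 2]
  | .n, .g₃ => [-1, 2 * x - 1]
  | .n, .g₄ => [-1]
  | .n, .h₁ => [-1, x - 1, x - 1]
  | .n, .h₂ => [x - 1]
  | .n, .h₃ => [x - 1, x - 1]
  | .n, .h₄ => [-1, x - 1]
  | .n, .k₁ => [-1, x - 1, x - 1, x - 1]
  | .n, .k₂ => [-1, x - 1]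
  | .n, .k₃ => [x, x - 1]
  | .n, .k₄ => [x - 1, x - 1]
  | .g₁, .g₂ => [-1, 2]
  | .g₁, .g₃ => [-1, x ^ 2 + x - 1]
  | .g₁, .g₄ => [-1, x ^ 2 + x + 1]
  | .g₁, .h₁ => [x ^ 2 + x - 1]
  | .g₁, .h₂ => [x ^ 2 + x - 1]
  | .g₁, .h₃ => [x ^ 2 - x + 1]
  | .g₁, .h₄ => [-1, x ^ 2 - x - 1]
  | .g₁, .k₁ => [x - 1, x ^ 3 + x ^ 2 - 1]
  | .g₁, .k₂ => [-1, x ^ 3 - x - 1]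
  | .g₁, .k₃ => [x, x]
  | .g₁, .k₄ => [x ^ 2 + 1]
  | .g₂, .g₃ => [x ^ 2 - x + 1]
  | .g₂, .g₄ => [x ^ 2 - x - 1]
  | .g₂, .h₁ => [-1, x ^ 2 - 3 * x + 1]
  | .g₂, .h₂ => [x ^ 2 - 3 * x + 3]
  | .g₂, .h₃ => [-1, x ^ 2 - x - 1]
  | .g₂, .h₄ => [-1, x ^ 2 - x - 1]
  | .g₂, .k₁ => [x - 1, x ^ 3 - 3 * x ^ 2 + 2 * x - 1]
  | .g₂, .k₂ => [-1, x ^ 3 - 2 * x ^ 2 + x - 1]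
  | .g₂, .k₃ => [x ^ 2 - 2 * x + 2]
  | .g₂, .k₄ => [x - 1, x - 1]
  | .g₃, .g₄ => [-1, 2, x, x]
  | .g₃, .h₁ => [x, x ^ 2 + x - 1]
  | .g₃, .h₂ => [x, x ^ 2 + x - 1]
  | .g₃, .h₃ => [-1, x, x ^ 2 - 3 * x + 1]
  | .g₃, .h₄ => [x, 3 * x ^ 2 - 3 * x + 1]
  | .g₃, .k₁ => [-1, x, x, x - 1, x - 1, x - 1]
  | .g₃, .k₂ => [x, x, 2 * x ^ 2 - 2 * x + 1]
  | .g₃, .k₃ => [x, x ^ 3 - x ^ 2 + 2 * x - 1]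
  | .g₃, .k₄ => [x, x ^ 3 - 2 * x ^ 2 + 3 * x - 1]
  | .g₄, .h₁ => [x, x ^ 2 - x + 1]
  | .g₄, .h₂ => [x, x ^ 2 + x - 1]
  | .g₄, .h₃ => [-1, x, x ^ 2 - x - 1]
  | .g₄, .h₄ => [-1, x, x ^ 2 - x - 1]
  | .g₄, .k₁ => [-1, x, x, x - 1, x ^ 2 + 1]
  | .g₄, .k₂ => [x, x]
  | .g₄, .k₃ => [x, x ^ 3 + x ^ 2 - 1]
  | .g₄, .k₄ => [x, x ^ 3 - x - 1]
  | .h₁, .h₂ => [x, x - 1, x ^ 2 + x - 1]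
  | .h₁, .h₃ => [2, x, x - 1, x - 1]
  | .h₁, .h₄ => [-1, x, x - 1, 3 * x ^ 2 - 3 * x + 1]
  | .h₁, .k₁ => [x, x, x - 1, x - 1, x - 1, x - 1]
  | .h₁, .k₂ => [-1, x, x, x - 1, 2 * x ^ 2 - 2 * x + 1]
  | .h₁, .k₃ => [x, x, x - 1, 3 * x - 2]
  | .h₁, .k₄ => [x, x - 1, x - 1, 3 * x - 1]
  | .h₂, .h₃ => [x, x - 1, x ^ 2 - 3 * x + 3]
  | .h₂, .h₄ => [2, 2, x, x - 1, x - 1]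
  | .h₂, .k₁ => [x, x, x - 1, 4 * x - 3]
  | .h₂, .k₂ => [x, x, x - 1, x - 1, x + 3]
  | .h₂, .k₃ => [x, x - 1, x - 1, x - 1]
  | .h₂, .k₄ => [x, x - 1, x - 2, x - 2]
  | .h₃, .h₄ => [x, x - 1, x ^ 2 - x - 1]
  | .h₃, .k₁ => [x, x, x - 1, x - 1, x - 1, x - 3]
  | .h₃, .k₂ => [x, x, x - 1, 2 * x - 3]
  | .h₃, .k₃ => [x, x - 1, x ^ 2 - 2 * x + 2]
  | .h₃, .k₄ => [x, x - 1, x - 1, x - 1]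
  | .h₄, .k₁ => [-1, x, x, x - 1, 2 * x - 1, 2 * x - 1]
  | .h₄, .k₂ => [-1, x, x, x - 1, x - 1, x - 1]
  | .h₄, .k₃ => [x, x - 1, x - 1, 3 * x + 1]
  | .h₄, .k₄ => [x, x, x - 1, 3 * x - 4]
  | .k₁, .k₂ => [-1, x, x, x, x, x, x, x - 1]
  | .k₁, .k₃ => [x, x, x - 1, x ^ 3 + x ^ 2 - 1]
  | .k₁, .k₄ => [x, x, x - 1, x - 1, x ^ 2 + 1]
  | .k₂, .k₃ => [x, x, x - 1, x - 1, x + 1, x + 1]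
  | .k₂, .k₄ => [x, x, x - 1, x ^ 3 - x - 1]
  | .k₃, .k₄ => [x, x - 1]
  | _, _ => []

/-- The factorisations of the discriminants. -/
def discrFactors (x : R) : Form → List R
  | .g₃ => [x - 1, x - 1]
  | .g₄ => [x + 1, x + 1]
  | .h₁ => [2 * x - 1, 2 * x - 1]
  | .h₂ => [-1, 2, 2, x - 1]
  | .h₄ => [2, 2, x, x - 1]
  | .k₁ => [x, x, 4 * x - 3]
  | .k₂ => [x, x, x - 1, x + 3]
  | .k₃ => [-1, x - 1, 3 * x + 1]
  | .k₄ => [-1, x, 3 * x - 4]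
  | _ => []

lemma resultant_eq_prod (x : R) {i j : Form} (hij : i.ctorIdx < j.ctorIdx) :
    resultant x i j = (resultantFactors x i j).prod := by
  cases i <;> cases j <;> first
    | exact absurd hij (by decide)
    | (simp [resultant, IsLinear, quadCoeff, linCoeff, value, resultantFactors]; try ring)

lemma discr_eq_prod (x : R) (i : Form) : discr x i = (discrFactors x i).prod := by
  cases i <;> simp [discr, quadCoeff, linCoeff, value, discrFactors] <;> try ring

lemma resultantFactors_subset (x : R) (i j : Form) :
    resultantFactors x i j ⊆ degenerationFactors x := by
  cases i <;> cases j <;>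
    simp only [resultantFactors, degenerationFactors, List.cons_subset, List.nil_subset,
      List.mem_cons, true_or, or_true, and_self]

lemma discrFactors_subset (x : R) (i : Form) : discrFactors x i ⊆ degenerationFactors x := by
  cases i <;> simp [discrFactors, degenerationFactors]

/-- The form `d` if the form enters the sign patterns divided by `d`, and `1` otherwise. -/
def twist (x y : R) : Form → R
  | .n | .h₁ | .h₂ | .h₃ | .h₄ | .k₁ | .k₂ | .k₃ | .k₄ => value x y .d
  | _ => 1

/-- The product of a form with its twist, which has the quadratic character of the quotient. -/
def twisted (x y : R) (i : Form) : R :=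
  value x y i * twist x y i

/-- The degree in `y` of a twisted form. -/
def degree : Form → ℕ
  | .n | .h₁ | .h₃ => 2
  | .h₂ | .h₄ | .k₁ | .k₂ | .k₃ | .k₄ => 3
  | _ => 1

/-- No form degenerates, and no two of them acquire a common root, at the given `x`. -/
def Generic (x : R) : Prop :=
  ∀ z ∈ degenerationFactors x, z ≠ 0

lemma value_C_X (x : R) (i : Form) :
    value (C x) X i = C (quadCoeff x i) * X ^ 2 + C (linCoeff x i) * X + C (value x 0 i) := by
  cases i <;> simp [value, quadCoeff, linCoeff, map_ofNat C] <;> ring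

lemma twist_eq_one_or_eq_value_d (x y : R) (i : Form) :
    twist x y i = 1 ∨ twist x y i = value x y .d := by
  cases i <;> simp [twist]

lemma eval_twisted (x y : R) (i : Form) : (twisted (C x) X i).eval y = twisted x y i := by
  cases i <;> simp [twisted, value, twist]

end Ring

section Field

variable {F : Type*} [Field F] {x : F}

lemma natDegree_twisted_le (i : Form) : (twisted (C x) X i).natDegree ≤ i.degree := by
  cases i <;> simp only [twisted, value, twist, degree] <;> compute_degree

lemma resultant_ne_zero (hx : Generic x) {i j : Form} (hij : i.ctorIdx < j.ctorIdx) :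
    resultant x i j ≠ 0 := by
  rw [resultant_eq_prod x hij]
  exact List.prod_ne_zero fun h => hx 0 (resultantFactors_subset x i j h) rfl

lemma discr_ne_zero (hx : Generic x) (i : Form) : discr x i ≠ 0 := by
  rw [discr_eq_prod]
  exact List.prod_ne_zero fun h => hx 0 (discrFactors_subset x i h) rfl

lemma quadCoeff_eq_zero {i : Form} (h : i.IsLinear) : quadCoeff x i = 0 := by
  cases i <;> first | rfl | contradiction

lemma isCoprime_value (hx : Generic x) {i j : Form} (hij : i ≠ j) :
    IsCoprime (value (C x) X i) (value (C x) X j) := by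
  wlog hlt : i.ctorIdx < j.ctorIdx generalizing i j
  · have htrichotomy : ∀ i j : Form, i ≠ j → ¬i.ctorIdx < j.ctorIdx → j.ctorIdx < i.ctorIdx := by
      decide
    exact (this hij.symm (htrichotomy i j hij hlt)).symm
  have hres := resultant_ne_zero hx hlt
  rw [value_C_X, value_C_X]
  rw [resultant] at hres
  split_ifs at hres with hlin
  · obtain ⟨hi, hj⟩ := Bool.and_eq_true_iff.1 hlin
    simpa [quadCoeff_eq_zero hi, quadCoeff_eq_zero hj] using isCoprime_linear hres
  · exact isCoprime_quadratic hres

lemma isCoprime_value_twist (hx : Generic x) {i : Form} (hi : i ≠ .d) (j : Form) :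
    IsCoprime (value (C x) X i) (twist (C x) X j) := by
  rcases twist_eq_one_or_eq_value_d (C x) X j with h | h
  · exact h ▸ isCoprime_one_right
  · exact h ▸ isCoprime_value hx hi

lemma value_C_X_ne_zero (hx : Generic x) (i : Form) : value (C x) X i ≠ 0 := by
  rw [value_C_X]
  exact (squarefree_quadratic (discr_ne_zero hx i)).ne_zero

lemma twisted_C_X_ne_zero (hx : Generic x) (i : Form) : twisted (C x) X i ≠ 0 := by
  refine mul_ne_zero (value_C_X_ne_zero hx i) ?_
  rcases twist_eq_one_or_eq_value_d (C x) X i with h | h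
  · exact h ▸ one_ne_zero
  · exact h ▸ value_C_X_ne_zero hx .d

/-- The form `d` may divide the twists, but any other form of `S` divides the product only once. -/
lemma prod_twisted_ne_C_mul_sq (hx : Generic x) {S : Finset Form} (hS : S.Nonempty) (c : F)
    (g : F[X]) : ∏ i ∈ S, twisted (C x) X i ≠ C c * g ^ 2 := by
  obtain ⟨i, hi, hcop⟩ : ∃ i ∈ S, IsCoprime (value (C x) X i)
      (twist (C x) X i * ∏ j ∈ S.erase i, twisted (C x) X j) := by
    by_cases hc : ∃ i ∈ S, i ≠ .d
    · obtain ⟨i, hi, hid⟩ := hc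
      refine ⟨i, hi, (isCoprime_value_twist hx hid i).mul_right (IsCoprime.prod_right ?_)⟩
      intro j hj
      exact (isCoprime_value hx (Finset.ne_of_mem_erase hj).symm).mul_right
        (isCoprime_value_twist hx hid j)
    · push Not at hc
      obtain rfl := Finset.eq_singleton_iff_nonempty_unique_mem.2 ⟨hS, hc⟩
      exact ⟨.d, by simp, by simpa [twist] using isCoprime_one_right⟩
  have hprod : ∏ j ∈ S, twisted (C x) X j =
      value (C x) X i * (twist (C x) X i * ∏ j ∈ S.erase i, twisted (C x) X j) := by
    rw [← Finset.mul_prod_erase S _ hi, twisted, mul_assoc]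
  have hne : ∏ j ∈ S, twisted (C x) X j ≠ 0 :=
    Finset.prod_ne_zero_iff.2 fun j _ => twisted_C_X_ne_zero hx j
  rw [hprod] at hne ⊢
  have hval := value_C_X x i
  exact mul_ne_C_mul_sq_of_squarefree (hval ▸ squarefree_quadratic (discr_ne_zero hx i))
    (hval ▸ not_isUnit_quadratic (discr_ne_zero hx i)) hcop (right_ne_zero_of_mul hne) c g

end Field

lemma natDegree_value_le {R : Type*} [CommRing R] {x : R} (i : Form) :
    (value (C x) X i).natDegree ≤ if i.IsLinear then 1 else 2 := by
  cases i <;> simp only [value, IsLinear, reduceIte, Bool.false_eq_true] <;> compute_degree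

lemma natDegree_le_of_mem_degenerationFactors {R : Type*} [CommRing R] :
    ∀ p ∈ degenerationFactors (X : R[X]), p.natDegree ≤ 3 := by
  simp only [degenerationFactors, List.forall_mem_cons]
  and_intros
  all_goals first | compute_degree! | simp

lemma ne_zero_of_mem_degenerationFactors {F : Type*} [Field F]
    (hchar : ringChar F ≠ 2) :
    ∀ p ∈ degenerationFactors (X : F[X]), p ≠ 0 := by
  have h2 : (2 : F) ≠ 0 := Ring.two_ne_zero hchar
  have h4 : (4 : F) ≠ 0 := by
    rw [show (4 : F) = 2 * 2 by norm_num]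
    exact mul_ne_zero h2 h2
  suffices ∀ p ∈ degenerationFactors (X : F[X]), p.eval 0 ≠ 0 ∨ p.eval 1 ≠ 0 by
    rintro p hp rfl
    simpa using this 0 hp
  simp only [degenerationFactors, List.forall_mem_cons]
  and_intros
  any_goals norm_num [h2, h4]

section Counting

variable {F : Type*} [Field F] [Fintype F] {x : F}

/-- The quadratic character of a twisted form. -/
def sign (x y : F) (i : Form) : ℝ :=
  (quadraticChar F (twisted x y i) : ℤ)

lemma abs_sum_prod_sign_le (hchar : ringChar F ≠ 2) (hx : Generic x) {S : Finset Form}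
    (hS : S.Nonempty) :
    |∑ y, ∏ i ∈ S, sign x y i| ≤
      (2 * ∑ i ∈ S, (i.degree : ℝ) + 3) * √(Fintype.card F) := by
  set f : F[X] := ∏ i ∈ S, twisted (C x) X i
  have hsum : ((∑ y, quadraticChar F (f.eval y) : ℤ) : ℝ) = ∑ y, ∏ i ∈ S, sign x y i := by
    simp only [f, eval_prod, eval_twisted, map_prod, Int.cast_sum, Int.cast_prod, sign]
  have hdeg : (f.natDegree : ℝ) ≤ ∑ i ∈ S, (i.degree : ℝ) := by
    exact_mod_cast (natDegree_prod_le _ _).trans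
      (Finset.sum_le_sum fun i _ => natDegree_twisted_le i)
  rw [← hsum]
  refine (abs_sum_quadraticChar_eval_le (prod_twisted_ne_C_mul_sq hx hS) hchar).trans ?_
  gcongr

lemma abs_sign_le_one (x y : F) (i : Form) : |sign x y i| ≤ 1 := by
  rcases eq_or_ne (twisted x y i) 0 with h | h
  · simp [sign, h]
  · rcases quadraticChar_dichotomy h with h | h <;> simp [sign, h]

lemma card_value_eq_zero_le (hx : Generic x) :
    (Finset.univ.filter fun y => ∃ i, value x y i = 0).card ≤ 21 := by
  have heval : ∀ y i, (value (C x) X i).eval y = value x y i := by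
    intro y i
    cases i <;> simp [value]
  set f : F[X] := ∏ i, value (C x) X i
  have hf : f ≠ 0 := Finset.prod_ne_zero_iff.2 fun i _ => value_C_X_ne_zero hx i
  have hroots : (Finset.univ.filter fun y => ∃ i, value x y i = 0) = f.roots.toFinset := by
    ext y
    simp [hf, f, eval_prod, heval, Finset.prod_eq_zero_iff]
  calc (Finset.univ.filter fun y => ∃ i, value x y i = 0).card
      ≤ f.natDegree := hroots ▸ (Multiset.toFinset_card_le _).trans (card_roots' f)
    _ ≤ ∑ i : Form, if i.IsLinear then 1 else 2 :=
        (natDegree_prod_le _ _).trans (Finset.sum_le_sum fun i _ => natDegree_value_le i)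
    _ = 21 := by decide

lemma card_not_generic_le (hchar : ringChar F ≠ 2) :
    (Finset.univ.filter fun x : F => ¬Generic x).card ≤ 93 := by
  have heval : ∀ x : F, (degenerationFactors X).map (eval x) = degenerationFactors x := by
    intro x
    simp [degenerationFactors]
  set f : F[X] := (degenerationFactors X).prod with hfdef
  have hf : f ≠ 0 := List.prod_ne_zero fun h => ne_zero_of_mem_degenerationFactors hchar 0 h rfl
  have hroots : (Finset.univ.filter fun x : F => ¬Generic x) = f.roots.toFinset := by
    ext x
    have : eval x f = (degenerationFactors x).prod := by
      rw [hfdef, ← coe_evalRingHom, map_list_prod, coe_evalRingHom, heval]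
    simp [hf, this, Generic, List.prod_eq_zero_iff]
  have hdeg : f.natDegree ≤ ((degenerationFactors (X : F[X])).map natDegree).length • 3 := by
    refine (natDegree_list_prod_le _).trans (List.sum_le_card_nsmul _ _ ?_)
    simpa only [List.forall_mem_map] using natDegree_le_of_mem_degenerationFactors
  rw [hroots]
  refine (Multiset.toFinset_card_le _).trans ((card_roots' f).trans (hdeg.trans ?_))
  simp [degenerationFactors]

end Counting

end Form

section SignExpansion

variable {σ : Type*} [DecidableEq σ] {w : σ → ℝ}

/-- `Φ` is a linear combination of products `∏ j ∈ S, t j` with `S ⊆ V`, in which `m` is the total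
coefficient of the empty product, `L` bounds the sum of the absolute values of the coefficients, and
`W` bounds their sum weighted by `∑ j ∈ S, w j`. -/
def HasSignExpansion (w : σ → ℝ) (V : Finset σ) (Φ : (σ → ℝ) → ℝ) (m L W : ℝ) : Prop :=
  ∃ (ι : Type) (_ : Fintype ι) (c : ι → ℝ) (S : ι → Finset σ),
    (∀ i, S i ⊆ V) ∧ (∀ t, Φ t = ∑ i, c i * ∏ j ∈ S i, t j) ∧
    (∑ i, if S i = ∅ then c i else 0) = m ∧ ∑ i, |c i| ≤ L ∧
    ∑ i, |c i| * ∑ j ∈ S i, w j ≤ W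

namespace HasSignExpansion

variable {V V' : Finset σ} {Φ Φ' : (σ → ℝ) → ℝ} {m m' L L' W W' : ℝ}

lemma add (h : HasSignExpansion w V Φ m L W) (h' : HasSignExpansion w V' Φ' m' L' W') :
    HasSignExpansion w (V ∪ V') (fun t => Φ t + Φ' t) (m + m') (L + L') (W + W') := by
  obtain ⟨ι, _, c, S, hS, hΦ, hm, hL, hW⟩ := h
  obtain ⟨ι', _, c', S', hS', hΦ', hm', hL', hW'⟩ := h'
  refine ⟨ι ⊕ ι', inferInstance, Sum.elim c c', Sum.elim S S', ?_, ?_, ?_, ?_, ?_⟩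
  · rintro (i | i)
    · exact (hS i).trans Finset.subset_union_left
    · exact (hS' i).trans Finset.subset_union_right
  · simp [hΦ, hΦ', Fintype.sum_sum_type]
  · rw [← hm, ← hm', Fintype.sum_sum_type]
    congr!
  · simpa [Fintype.sum_sum_type] using add_le_add hL hL'
  · simpa [Fintype.sum_sum_type] using add_le_add hW hW'

lemma sum_mul_sum_union_eq {ι ι' : Type*} [Fintype ι] [Fintype ι'] {c : ι → ℝ} {c' : ι' → ℝ}
    {S : ι → Finset σ} {S' : ι' → Finset σ} (hdis : ∀ i j, Disjoint (S i) (S' j)) :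
    ∑ p : ι × ι', |c p.1 * c' p.2| * ∑ j ∈ S p.1 ∪ S' p.2, w j =
      (∑ i, |c i|) * (∑ i, |c' i| * ∑ j ∈ S' i, w j) +
        (∑ i, |c i| * ∑ j ∈ S i, w j) * ∑ i, |c' i| := by
  simp only [Finset.sum_mul_sum, Fintype.sum_prod_type, ← Finset.sum_add_distrib]
  refine Finset.sum_congr rfl fun i _ => Finset.sum_congr rfl fun j _ => ?_
  rw [Finset.sum_union (hdis i j), abs_mul]
  ring

lemma mul (hw : ∀ j, 0 ≤ w j) (hV : Disjoint V V') (h : HasSignExpansion w V Φ m L W)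
    (h' : HasSignExpansion w V' Φ' m' L' W') :
    HasSignExpansion w (V ∪ V') (fun t => Φ t * Φ' t) (m * m') (L * L') (L * W' + W * L') := by
  obtain ⟨ι, _, c, S, hS, hΦ, hm, hL, hW⟩ := h
  obtain ⟨ι', _, c', S', hS', hΦ', hm', hL', hW'⟩ := h'
  have hdis : ∀ i j, Disjoint (S i) (S' j) := fun i j =>
    Finset.disjoint_of_subset_left (hS i) (Finset.disjoint_of_subset_right (hS' j) hV)
  have hL0 : 0 ≤ L := (Finset.sum_nonneg fun i _ => abs_nonneg _).trans hL
  have hW0 : 0 ≤ W := (Finset.sum_nonneg fun i _ =>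
    mul_nonneg (abs_nonneg _) (Finset.sum_nonneg fun j _ => hw j)).trans hW
  refine ⟨ι × ι', inferInstance, fun p => c p.1 * c' p.2, fun p => S p.1 ∪ S' p.2,
    fun p => Finset.union_subset_union (hS _) (hS' _), fun t => ?_, ?_, ?_, ?_⟩
  · simp only [hΦ, hΦ', Finset.sum_mul_sum, Fintype.sum_prod_type, Finset.prod_union (hdis _ _)]
    exact Finset.sum_congr rfl fun i _ => Finset.sum_congr rfl fun j _ => by ring
  · simp only [← hm, ← hm', Finset.sum_mul_sum, Fintype.sum_prod_type, Finset.union_eq_empty,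
      ite_zero_mul_ite_zero]
  · simp only [Fintype.sum_prod_type, abs_mul, ← Finset.sum_mul_sum]
    gcongr
  · rw [sum_mul_sum_union_eq hdis]
    gcongr
    exact Finset.sum_nonneg fun i _ => mul_nonneg (abs_nonneg _) (Finset.sum_nonneg fun j _ => hw j)

lemma abs_le (h : HasSignExpansion w V Φ m L W) {t : σ → ℝ} (ht : ∀ j, |t j| ≤ 1) : |Φ t| ≤ L := by
  obtain ⟨ι, _, c, S, -, hΦ, -, hL, -⟩ := h
  rw [hΦ]
  refine (Finset.abs_sum_le_sum_abs _ _).trans ((Finset.sum_le_sum fun i _ => ?_).trans hL)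
  rw [abs_mul, Finset.abs_prod]
  exact mul_le_of_le_one_right (abs_nonneg _)
    (Finset.prod_le_one (fun j _ => abs_nonneg _) fun j _ => ht j)

lemma abs_sum_sub_le {Y : Type*} [Fintype Y] (hw : ∀ j, 0 ≤ w j)
    (h : HasSignExpansion w V Φ m L W) {s : Y → σ → ℝ} {r : ℝ} (hr : 0 ≤ r)
    (hs : ∀ S : Finset σ, S.Nonempty → |∑ y, ∏ j ∈ S, s y j| ≤ (2 * ∑ j ∈ S, w j + 3) * r) :
    |∑ y, Φ (s y) - m * Fintype.card Y| ≤ (2 * W + 3 * L) * r := by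
  obtain ⟨ι, _, c, S, -, hΦ, hm, hL, hW⟩ := h
  have hexpand : ∑ y, Φ (s y) - m * Fintype.card Y =
      ∑ i, c i * if S i = ∅ then 0 else ∑ y, ∏ j ∈ S i, s y j := by
    simp only [← hm, hΦ]
    rw [Finset.sum_mul, Finset.sum_comm, ← Finset.sum_sub_distrib]
    refine Finset.sum_congr rfl fun i _ => ?_
    rw [← Finset.mul_sum]
    split_ifs with hi
    · simp [hi]
    · ring
  have hterm : ∀ i, |if S i = ∅ then 0 else ∑ y, ∏ j ∈ S i, s y j| ≤
      (2 * ∑ j ∈ S i, w j + 3) * r := by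
    intro i
    split_ifs with hi
    · rw [abs_zero]
      have : 0 ≤ ∑ j ∈ S i, w j := Finset.sum_nonneg fun j _ => hw j
      positivity
    · exact hs _ (Finset.nonempty_iff_ne_empty.2 hi)
  calc |∑ y, Φ (s y) - m * Fintype.card Y|
      ≤ ∑ i, |c i| * ((2 * ∑ j ∈ S i, w j + 3) * r) := by
        rw [hexpand]
        refine (Finset.abs_sum_le_sum_abs _ _).trans (Finset.sum_le_sum fun i _ => ?_)
        rw [abs_mul]
        exact mul_le_mul_of_nonneg_left (hterm i) (abs_nonneg _)
    _ = (2 * ∑ i, |c i| * ∑ j ∈ S i, w j + 3 * ∑ i, |c i|) * r := by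
        simp only [Finset.mul_sum (s := Finset.univ), ← Finset.sum_add_distrib, Finset.sum_mul]
        exact Finset.sum_congr rfl fun i _ => by ring
    _ ≤ (2 * W + 3 * L) * r := by gcongr

end HasSignExpansion

/-- The indicator of `s = e`, for signs `e, s = ±1`. -/
def signIndicator (e s : ℝ) : ℝ :=
  (1 + e * s) / 2

/-- The indicator of `(s ∨ k) ∧ ¬(g ∧ s ∧ ¬h)`, for signs with `1` read as true. -/
def mixedIndicator (s k g h : ℝ) : ℝ :=
  1 - (1 - s) * (1 - k) / 4 - (1 + g) * (1 + s) * (1 - h) / 8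

/-- The indicator of `¬(g ∧ s) ∧ (s ∨ k) ∧ (g ∨ l)`, for signs with `1` read as true. -/
def negativeIndicator (g s k l : ℝ) : ℝ :=
  (1 + g) * (1 - s) * (1 + k) / 8 + (1 - g) * (1 + s) * (1 + l) / 8 +
    (1 - g) * (1 - s) * (1 + k) * (1 + l) / 16

lemma hasSignExpansion_signIndicator (i : σ) {e : ℝ} (he : |e| = 1) :
    HasSignExpansion w {i} (fun t => signIndicator e (t i)) (1 / 2) 1 (w i / 2) := by
  refine ⟨Fin 2, inferInstance, ![1 / 2, e / 2], ![∅, {i}], ?_, fun t => ?_, ?_, ?_, ?_⟩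
  · simp [Fin.forall_fin_succ]
  · simp [signIndicator]
    ring
  · simp
  · simp [abs_div, he]
    norm_num
  · simp [he, div_eq_inv_mul]

lemma hasSignExpansion_mixedIndicator {i k g h : σ} (hnodup : [i, k, g, h].Nodup) :
    HasSignExpansion w {i, k, g, h} (fun t => mixedIndicator (t i) (t k) (t g) (t h)) (5 / 8) 2
      ((3 * w i + 2 * w k + 2 * w g + 2 * w h) / 4) := by
  obtain ⟨⟨hik, hig, hih⟩, -, hgh⟩ : (i ≠ k ∧ i ≠ g ∧ i ≠ h) ∧ (k ≠ g ∧ k ≠ h) ∧ g ≠ h := by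
    simpa using hnodup
  refine ⟨Fin 10, inferInstance,
    ![5 / 8, 1 / 8, 1 / 4, -1 / 4, -1 / 8, 1 / 8, 1 / 8, -1 / 8, 1 / 8, 1 / 8],
    ![∅, {i}, {k}, {i, k}, {g}, {h}, {g, h}, {i, g}, {i, h}, {i, g, h}], ?_, fun t => ?_, ?_, ?_,
    ?_⟩
  · simp [Fin.forall_fin_succ, Finset.subset_iff]
  · simp [Fin.sum_univ_succ, Finset.prod_insert, hik, hig, hih, hgh, mixedIndicator]
    ring
  · simp [Fin.sum_univ_succ]
  · simp [Fin.sum_univ_succ, abs_div]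
    norm_num
  · simp [Fin.sum_univ_succ, abs_div, Finset.sum_insert, hik, hig, hih, hgh]
    exact le_of_eq (by ring)

lemma hasSignExpansion_negativeIndicator {i k g h : σ} (hnodup : [i, k, g, h].Nodup) :
    HasSignExpansion w {i, k, g, h} (fun t => negativeIndicator (t i) (t k) (t g) (t h)) (5 / 16)
      (15 / 8) (3 * (w i + w k + w g + w h) / 4) := by
  obtain ⟨⟨hik, hig, hih⟩, ⟨hkg, hkh⟩, hgh⟩ :
      (i ≠ k ∧ i ≠ g ∧ i ≠ h) ∧ (k ≠ g ∧ k ≠ h) ∧ g ≠ h := by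
    simpa using hnodup
  refine ⟨Fin 16, inferInstance,
    ![5 / 16, -1 / 16, -1 / 16, -3 / 16, 3 / 16, 1 / 16, -3 / 16, -1 / 16,
      3 / 16, -3 / 16, 1 / 16, -1 / 16, 1 / 16, -1 / 16, -1 / 16, 1 / 16],
    ![∅, {i}, {k}, {i, k}, {g}, {i, g}, {k, g}, {i, k, g}, {h}, {i, h}, {k, h}, {i, k, h},
      {g, h}, {i, g, h}, {k, g, h}, {i, k, g, h}], ?_, fun t => ?_, ?_, ?_, ?_⟩
  · simp [Fin.forall_fin_succ, Finset.subset_iff]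
  · simp [Fin.sum_univ_succ, Finset.prod_insert, hik, hig, hih, hgh, hkg, hkh, negativeIndicator]
    ring
  · simp [Fin.sum_univ_succ]
  · simp [Fin.sum_univ_succ, abs_div]
    norm_num
  · simp [Fin.sum_univ_succ, abs_div, Finset.sum_insert, hik, hig, hih, hgh, hkg, hkh]
    exact le_of_eq (by ring)

end SignExpansion

/-- The indicator of maximal nonassociativity as a function of the signs of the forms, where
`ε` is the sign of `x - 1`. -/
def goodIndicator (ε : ℝ) (t : Form → ℝ) : ℝ :=
  signIndicator 1 (t .y) *
    (signIndicator (-ε) (t .d) * signIndicator 1 (t .n) *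
        signIndicator (-1) (t .h₁) * signIndicator (-1) (t .h₃) *
        mixedIndicator (t .g₃) (t .k₁) (t .g₁) (t .h₂) *
        mixedIndicator (t .g₂) (t .k₄) (t .g₄) (t .h₄) +
      signIndicator ε (t .d) * signIndicator (-1) (t .n) *
        signIndicator (-1) (t .h₂) * signIndicator (-1) (t .h₄) *
        mixedIndicator (t .g₁) (t .k₃) (t .g₃) (t .h₁) *
        mixedIndicator (t .g₄) (t .k₂) (t .g₂) (t .h₃) +
      signIndicator (-ε) (t .d) * signIndicator (-1) (t .n) *
        signIndicator (-1) (t .h₁) * signIndicator (-1) (t .h₃) *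
        signIndicator (-1) (t .h₂) * signIndicator (-1) (t .h₄) *
        negativeIndicator (t .g₁) (t .g₃) (t .k₁) (t .k₃) *
        negativeIndicator (t .g₄) (t .g₂) (t .k₄) (t .k₂))

lemma hasSignExpansion_goodIndicator {ε : ℝ} (hε : |ε| = 1) :
    HasSignExpansion (fun i : Form => (i.degree : ℝ)) Finset.univ (goodIndicator ε) (825 / 32768)
      (737 / 64) (7367 / 64) := by
  have hw : ∀ i : Form, (0 : ℝ) ≤ i.degree := fun i => Nat.cast_nonneg _
  have hε' : |-ε| = 1 := by rw [abs_neg, hε]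
  have hpos (i : Form) := hasSignExpansion_signIndicator (w := fun i => (i.degree : ℝ)) i abs_one
  have hneg (i : Form) := hasSignExpansion_signIndicator (w := fun i => (i.degree : ℝ)) i
    ((abs_neg (1 : ℝ)).trans abs_one)
  have hn := ((((hasSignExpansion_signIndicator .d hε').mul hw (by decide) (hpos .n)).mul hw
    (by decide) (hneg .h₁)).mul hw (by decide) (hneg .h₃)).mul hw (by decide)
    (hasSignExpansion_mixedIndicator (i := .g₃) (k := .k₁) (g := .g₁) (h := .h₂) (by decide))
    |>.mul hw (by decide)
    (hasSignExpansion_mixedIndicator (i := .g₂) (k := .k₄) (g := .g₄) (h := .h₄) (by decide))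
  have he := ((((hasSignExpansion_signIndicator .d hε).mul hw (by decide) (hneg .n)).mul hw
    (by decide) (hneg .h₂)).mul hw (by decide) (hneg .h₄)).mul hw (by decide)
    (hasSignExpansion_mixedIndicator (i := .g₁) (k := .k₃) (g := .g₃) (h := .h₁) (by decide))
    |>.mul hw (by decide)
    (hasSignExpansion_mixedIndicator (i := .g₄) (k := .k₂) (g := .g₂) (h := .h₃) (by decide))
  have hboth := ((((((hasSignExpansion_signIndicator .d hε').mul hw (by decide) (hneg .n)).mul hw
    (by decide) (hneg .h₁)).mul hw (by decide) (hneg .h₃)).mul hw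
    (by decide) (hneg .h₂)).mul hw (by decide) (hneg .h₄)).mul hw (by decide)
    (hasSignExpansion_negativeIndicator (i := .g₁) (k := .g₃) (g := .k₁) (h := .k₃) (by decide))
    |>.mul hw (by decide)
    (hasSignExpansion_negativeIndicator (i := .g₄) (k := .g₂) (g := .k₄) (h := .k₂) (by decide))
  have h := (hpos .y).mul hw (by decide) ((hn.add he).add hboth)
  convert h using 1
  · decide
  · rfl
  all_goals norm_num [Form.degree]

lemma abs_goodIndicator_le {ε : ℝ} (hε : |ε| = 1) {t : Form → ℝ} (ht : ∀ i, |t i| ≤ 1) :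
    |goodIndicator ε t| ≤ 737 / 64 :=
  (hasSignExpansion_goodIndicator hε).abs_le ht

lemma abs_sum_goodIndicator_sub_le {F : Type*} [Field F] [Fintype F] (hchar : ringChar F ≠ 2)
    {x : F} (hx : Form.Generic x) {ε : ℝ} (hε : |ε| = 1) :
    |∑ y, goodIndicator ε (Form.sign x y) - 825 / 32768 * Fintype.card F| ≤
      265 * √(Fintype.card F) := by
  refine ((hasSignExpansion_goodIndicator hε).abs_sum_sub_le (fun i => Nat.cast_nonneg _)
    (Real.sqrt_nonneg _) fun S hS => Form.abs_sum_prod_sign_le hchar hx hS).trans ?_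
  gcongr
  norm_num

section Squareness

variable {F : Type*} [Field F]

/-- Whether `z` is a square. -/
def isSq (z : F) : Bool :=
  decide (IsSquare z)

lemma isSq_inv (z : F) : isSq z⁻¹ = isSq z := by
  simp [isSq]

lemma isSq_one : isSq (1 : F) = true :=
  decide_eq_true .one

/-- The sign `1` of `true` and `-1` of `false`. -/
def boolSign (b : Bool) : ℝ :=
  cond b 1 (-1)

variable [Fintype F]

lemma quadraticChar_eq_boolSign {z : F} (hz : z ≠ 0) :
    ((quadraticChar F z : ℤ) : ℝ) = boolSign (isSq z) := by
  by_cases h : IsSquare z <;>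
    simp [quadraticChar_apply, quadraticCharFun, hz, h, boolSign, isSq]

lemma isSq_mul {z w : F} (hz : z ≠ 0) (hw : w ≠ 0) : isSq (z * w) = (isSq z == isSq w) := by
  have h : boolSign (isSq (z * w)) = boolSign (isSq z) * boolSign (isSq w) := by
    rw [← quadraticChar_eq_boolSign (mul_ne_zero hz hw), map_mul, Int.cast_mul,
      quadraticChar_eq_boolSign hz, quadraticChar_eq_boolSign hw]
  revert h
  cases isSq (z * w) <;> cases isSq z <;> cases isSq w <;> norm_num [boolSign]

lemma isSq_neg_one (hF : Fintype.card F % 4 = 3) : isSq (-1 : F) = false := by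
  rw [isSq, decide_eq_false_iff_not, FiniteField.isSquare_neg_one_iff]
  simpa using hF

lemma isSq_neg (hF : Fintype.card F % 4 = 3) {z : F} (hz : z ≠ 0) : isSq (-z) = !isSq z := by
  rw [← neg_one_mul, isSq_mul (neg_ne_zero.2 one_ne_zero) hz, isSq_neg_one hF, Bool.false_beq]

end Squareness

section Associativity

variable {F : Type*} [Field F]

lemma qop_add_right (a b u v z : F) : qop a b (u + z) (v + z) = qop a b u v + z := by
  simp only [qop, add_sub_add_right_eq_sub]
  split_ifs <;> ring

lemma maxNA_iff (a b : F) :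
    MaxNA a b ↔
      ∀ v w, qop a b (qop a b 0 v) w = qop a b 0 (qop a b v w) → v = 0 ∧ w = 0 := by
  refine ⟨fun h v w hvw => ?_, fun h u v w huvw => ?_⟩
  · obtain ⟨rfl, rfl⟩ := h 0 v w hvw
    exact ⟨rfl, rfl⟩
  · obtain ⟨v, rfl⟩ : ∃ v', v = v' + u := ⟨v - u, by ring⟩
    obtain ⟨w, rfl⟩ : ∃ w', w = w' + u := ⟨w - u, by ring⟩
    have key : qop a b (qop a b 0 v) w = qop a b 0 (qop a b v w) := by
      have h0 (z : F) : qop a b u (z + u) = qop a b 0 z + u := by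
        simpa using qop_add_right a b 0 z u
      rwa [h0, qop_add_right, qop_add_right, h0, add_left_inj] at huvw
    obtain ⟨rfl, rfl⟩ := h v w key
    simp

/-- The parameters `a` (for `true`) and `b` (for `false`) that satisfy `x = a / b` and
`y = (1 - a) / (1 - b)`. -/
def coef (x y : F) (c : Bool) : F :=
  cond c (x * (1 - y) / (x - y)) ((1 - y) / (x - y))

lemma qop_coef (x y u v : F) :
    qop (coef x y true) (coef x y false) u v = u + coef x y (isSq (v - u)) * (v - u) := by
  by_cases h : IsSquare (v - u) <;> simp [qop, isSq, h]

/-- `α₂ - α₃ * α₄`, where `αᵢ = coef x y cᵢ`, up to the factor in `coef_mul_coef_sub_coef`. -/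
def assocP (x y : F) : Bool → Bool → Bool → F
  | true, true, true => x * y
  | true, true, false => x
  | true, false, true => x
  | true, false, false => Form.value x y .g₁
  | false, true, true => Form.value x y .g₄
  | false, true, false => y
  | false, false, true => y
  | false, false, false => 1

/-- `α₁ + α₂ - α₁ * α₂ - α₄`, where `αᵢ = coef x y cᵢ`, up to the factor in
`coef_add_coef_sub_coef`. -/
def assocS (x y : F) : Bool → Bool → Bool → F
  | true, true, true => x * y
  | true, true, false => Form.value x y .g₃
  | true, false, true => y
  | true, false, false => x
  | false, true, true => y
  | false, true, false => x
  | false, false, true => Form.value x y .g₂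
  | false, false, false => 1

/-- The numerator of `S - (1 - α₁) * P`, for `P = assocP x y c₂ c₃ c₄` and
`S = assocS x y c₁ c₂ c₄`; it does not depend on `c₂`. -/
def assocT (x y : F) : Bool → Bool → Bool → F
  | true, true, true => x * x * y * Form.value x y .n
  | true, true, false => Form.value x y .k₁
  | true, false, true => x * y * Form.value x y .n
  | true, false, false => Form.value x y .h₁
  | false, true, true => y * Form.value x y .h₃
  | false, true, false => x * Form.value x y .n
  | false, false, true => Form.value x y .k₄
  | false, false, false => Form.value x y .n

/-- The numerator of `P - α₃ * S`, for `P = assocP x y c₂ c₃ c₄` and `S = assocS x y c₁ c₂ c₄`; it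
does not depend on `c₄`. -/
def assocU (x y : F) : Bool → Bool → Bool → F
  | true, true, true => x * y * y * (x - 1)
  | true, true, false => x * Form.value x y .h₂
  | true, false, true => Form.value x y .k₂
  | true, false, false => y * (x - 1)
  | false, true, true => x * y * (x - 1)
  | false, true, false => Form.value x y .k₃
  | false, false, true => Form.value x y .h₄
  | false, false, false => x - 1

variable {x y : F}

lemma coef_mul_coef_sub_coef (hxy : x - y ≠ 0) (c₂ c₃ c₄ : Bool) :
    coef x y c₄ * coef x y c₃ - coef x y c₂ =
      -((x - 1) * (1 - y) / (x - y) ^ 2) * assocP x y c₂ c₃ c₄ := by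
  cases c₂ <;> cases c₃ <;> cases c₄ <;>
    simp only [coef, cond_true, cond_false, assocP, Form.value] <;> field_simp <;> ring

lemma coef_add_coef_sub_coef (hxy : x - y ≠ 0) (c₁ c₂ c₄ : Bool) :
    coef x y c₁ + coef x y c₂ - coef x y c₁ * coef x y c₂ - coef x y c₄ =
      (x - 1) * (1 - y) / (x - y) ^ 2 * assocS x y c₁ c₂ c₄ := by
  cases c₁ <;> cases c₂ <;> cases c₄ <;>
    simp only [coef, cond_true, cond_false, assocS, Form.value] <;> field_simp <;> ring

lemma assocS_sub_mul_assocP (hxy : x - y ≠ 0) (c₁ c₂ c₃ c₄ : Bool) :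
    assocS x y c₁ c₂ c₄ - (1 - coef x y c₁) * assocP x y c₂ c₃ c₄ =
      assocT x y c₁ c₃ c₄ / (x - y) := by
  cases c₁ <;> cases c₂ <;> cases c₃ <;> cases c₄ <;>
    simp only [coef, cond_true, cond_false, assocP, assocS, assocT, Form.value] <;>
    field_simp <;> ring

lemma assocP_sub_mul_assocS (hxy : x - y ≠ 0) (c₁ c₂ c₃ c₄ : Bool) :
    assocP x y c₂ c₃ c₄ - coef x y c₃ * assocS x y c₁ c₂ c₄ =
      assocU x y c₁ c₂ c₃ / (x - y) := by
  cases c₁ <;> cases c₂ <;> cases c₃ <;> cases c₄ <;>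
    simp only [coef, cond_true, cond_false, assocP, assocS, assocU, Form.value] <;>
    field_simp <;> ring

/-- The nonzero associative triple `0, v, w` with `v = -z * P` and `w = v + z * S` is realised with
the pattern `c`: the entries of `c` record whether `v`, `w - α₁ * v`, `w - v` and
`v + α₃ * (w - v)` are squares. -/
def Realizes (x y z : F) (c₁ c₂ c₃ c₄ : Bool) : Prop :=
  isSq (-z * assocP x y c₂ c₃ c₄) = c₁ ∧ isSq (z * (assocT x y c₁ c₃ c₄ / (x - y))) = c₂ ∧
    isSq (z * assocS x y c₁ c₂ c₄) = c₃ ∧ isSq (-z * (assocU x y c₁ c₂ c₃ / (x - y))) = c₄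

lemma Realizes.assoc (hxy : x - y ≠ 0) {z : F} {c₁ c₂ c₃ c₄ : Bool}
    (hz : Realizes x y z c₁ c₂ c₃ c₄) {v w : F} (hv : v = -z * assocP x y c₂ c₃ c₄)
    (hw : w = v + z * assocS x y c₁ c₂ c₄) :
    qop (coef x y true) (coef x y false) (qop (coef x y true) (coef x y false) 0 v) w =
      qop (coef x y true) (coef x y false) 0 (qop (coef x y true) (coef x y false) v w) := by
  obtain ⟨h₁, h₂, h₃, h₄⟩ := hz
  have hwv : w - v = z * assocS x y c₁ c₂ c₄ := by rw [hw]; ring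
  have hT : w - coef x y c₁ * v = z * (assocT x y c₁ c₃ c₄ / (x - y)) := by
    rw [← assocS_sub_mul_assocP hxy c₁ c₂, hw, hv]; ring
  have hU : v + coef x y c₃ * (w - v) = -z * (assocU x y c₁ c₂ c₃ / (x - y)) := by
    rw [← assocP_sub_mul_assocS hxy c₁ c₂ c₃ c₄, hwv, hv]; ring
  rw [← hv] at h₁
  rw [← hT] at h₂
  rw [← hwv] at h₃
  rw [← hU] at h₄
  simp only [qop_coef, sub_zero, zero_add, h₁, h₂, h₃, h₄]
  linear_combination v * coef_add_coef_sub_coef hxy c₁ c₂ c₄ -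
    (w - v) * coef_mul_coef_sub_coef hxy c₂ c₃ c₄ +
    (x - 1) * (1 - y) / (x - y) ^ 2 * (assocS x y c₁ c₂ c₄ * hv + assocP x y c₂ c₃ c₄ * hwv)

lemma exists_realizes_of_assoc (hxy : x - y ≠ 0) (hx : x - 1 ≠ 0) (hy : 1 - y ≠ 0)
    (hS : ∀ c₁ c₂ c₄, assocS x y c₁ c₂ c₄ ≠ 0) {v w : F} (hvw : ¬(v = 0 ∧ w = 0))
    (hassoc : qop (coef x y true) (coef x y false) (qop (coef x y true) (coef x y false) 0 v) w =
      qop (coef x y true) (coef x y false) 0 (qop (coef x y true) (coef x y false) v w)) :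
    ∃ z ≠ 0, ∃ c₁ c₂ c₃ c₄, Realizes x y z c₁ c₂ c₃ c₄ := by
  simp only [qop_coef, sub_zero, zero_add] at hassoc
  generalize h₁ : isSq v = c₁ at hassoc
  generalize h₂ : isSq (w - coef x y c₁ * v) = c₂ at hassoc
  generalize h₃ : isSq (w - v) = c₃ at hassoc
  generalize h₄ : isSq (v + coef x y c₃ * (w - v)) = c₄ at hassoc
  have hprop : v * assocS x y c₁ c₂ c₄ + (w - v) * assocP x y c₂ c₃ c₄ = 0 := by
    refine (mul_eq_zero.1 ?_).resolve_left
      (div_ne_zero (mul_ne_zero hx hy) (pow_ne_zero 2 hxy))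
    linear_combination hassoc - v * coef_add_coef_sub_coef hxy c₁ c₂ c₄ +
      (w - v) * coef_mul_coef_sub_coef hxy c₂ c₃ c₄
  obtain ⟨z, hz⟩ : ∃ z, w - v = z * assocS x y c₁ c₂ c₄ :=
    ⟨(w - v) / assocS x y c₁ c₂ c₄, (div_mul_cancel₀ _ (hS _ _ _)).symm⟩
  have hv : v = -z * assocP x y c₂ c₃ c₄ := by
    apply mul_right_cancel₀ (hS c₁ c₂ c₄)
    linear_combination hprop - hz * assocP x y c₂ c₃ c₄
  refine ⟨z, ?_, c₁, c₂, c₃, c₄, ?_, ?_, ?_, ?_⟩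
  · rintro rfl
    have hv0 : v = 0 := by simpa using hv
    exact hvw ⟨hv0, by simpa [hv0] using hz⟩
  · rw [← hv, h₁]
  · rw [← h₂, ← assocS_sub_mul_assocP hxy c₁ c₂]
    congr 1
    linear_combination -hz - (1 - coef x y c₁) * hv
  · rw [← hz, h₃]
  · rw [← h₄, ← assocP_sub_mul_assocS hxy c₁ c₂ c₃ c₄]
    congr 1
    linear_combination -hv - coef x y c₃ * hz

lemma maxNA_coef_iff (hxy : x - y ≠ 0) (hx : x - 1 ≠ 0) (hy : 1 - y ≠ 0)
    (hP : ∀ c₂ c₃ c₄, assocP x y c₂ c₃ c₄ ≠ 0) (hS : ∀ c₁ c₂ c₄, assocS x y c₁ c₂ c₄ ≠ 0) :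
    MaxNA (coef x y true) (coef x y false) ↔
      ∀ z ≠ 0, ∀ c₁ c₂ c₃ c₄, ¬Realizes x y z c₁ c₂ c₃ c₄ := by
  rw [maxNA_iff]
  refine ⟨fun h z hz c₁ c₂ c₃ c₄ hc => ?_, fun h v w hvw => ?_⟩
  · exact mul_ne_zero (neg_ne_zero.2 hz) (hP _ _ _) (h _ _ (hc.assoc hxy rfl rfl)).1
  · by_contra hne
    obtain ⟨z, hz, c₁, c₂, c₃, c₄, hc⟩ := exists_realizes_of_assoc hxy hx hy hS hne hvw
    exact h z hz c₁ c₂ c₃ c₄ hc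

end Associativity

section SignPatterns

/-- The squareness of `assocP` in terms of the squareness `t` of the twisted forms, when `x` and `y`
are squares. -/
def patternP (t : Form → Bool) : Bool → Bool → Bool → Bool
  | true, false, false => t .g₁
  | false, true, true => t .g₄
  | _, _, _ => true

/-- The squareness of `assocS` in terms of the squareness `t` of the twisted forms, when `x` and `y`
are squares. -/
def patternS (t : Form → Bool) : Bool → Bool → Bool → Bool
  | true, true, false => t .g₃
  | false, false, true => t .g₂
  | _, _, _ => true

/-- The squareness of `assocT` divided by `x - y` in terms of the squareness `t` of the twisted
forms, when `x` and `y` are squares. -/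
def patternT (t : Form → Bool) : Bool → Bool → Bool → Bool
  | true, true, false => t .k₁
  | true, false, false => t .h₁
  | false, true, true => t .h₃
  | false, false, true => t .k₄
  | _, _, _ => t .n

/-- The squareness of `assocU` divided by `x - y` in terms of the squareness `e` of
`(x - 1) * (x - y)` and `t` of the twisted forms, when `x` and `y` are squares. -/
def patternU (e : Bool) (t : Form → Bool) : Bool → Bool → Bool → Bool
  | true, true, false => t .h₂
  | true, false, true => t .k₂
  | false, true, false => t .k₃
  | false, false, true => t .h₄
  | _, _, _ => e

/-- No pattern `c` is compatible with the squareness of the forms; the Boolean `β` stands for the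
squareness of the scaling parameter in `Realizes`. -/
def IsGoodPattern (e : Bool) (t : Form → Bool) : Prop :=
  ∀ β c₁ c₂ c₃ c₄ : Bool,
    ¬((!(β == patternP t c₂ c₃ c₄)) = c₁ ∧ (β == patternT t c₁ c₃ c₄) = c₂ ∧
      (β == patternS t c₁ c₂ c₄) = c₃ ∧ (!(β == patternU e t c₁ c₂ c₃)) = c₄)

/-- The part of the criterion for a good pattern that involves one of the two groups
`g₁, g₃, h₁, h₂, k₁, k₃` and `g₄, g₂, h₃, h₄, k₄, k₂` of forms. -/
def groupCondition (e n g g' h h' k k' : Bool) : Bool :=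
  !(!e && !g' && !k) && !(!e && h) && !(!n && h') && !(!n && !g && !k') &&
    !((g == g') && (h == h') && (h == !g))

lemma isGoodPattern_iff (e : Bool) (t : Form → Bool) :
    IsGoodPattern e t ↔ (e && t .n) = false ∧
      groupCondition e (t .n) (t .g₁) (t .g₃) (t .h₁) (t .h₂) (t .k₁) (t .k₃) ∧
      groupCondition e (t .n) (t .g₄) (t .g₂) (t .h₃) (t .h₄) (t .k₄) (t .k₂) := by
  simp only [IsGoodPattern, groupCondition, Bool.forall_bool, patternP, patternS, patternT,
    patternU]
  generalize t .n = n
  cases e <;> cases n <;> simp <;> grind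

lemma ite_groupCondition_false_true (g g' h h' k k' : Bool) :
    (if groupCondition false true g g' h h' k k' then (1 : ℝ) else 0) =
      signIndicator (-1) (boolSign h) *
        mixedIndicator (boolSign g') (boolSign k) (boolSign g) (boolSign h') := by
  cases g <;> cases g' <;> cases h <;> cases h' <;> cases k <;> cases k' <;>
    norm_num [groupCondition, boolSign, signIndicator, mixedIndicator]

lemma ite_groupCondition_true_false (g g' h h' k k' : Bool) :
    (if groupCondition true false g g' h h' k k' then (1 : ℝ) else 0) =
      signIndicator (-1) (boolSign h') *
        mixedIndicator (boolSign g) (boolSign k') (boolSign g') (boolSign h) := by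
  cases g <;> cases g' <;> cases h <;> cases h' <;> cases k <;> cases k' <;>
    norm_num [groupCondition, boolSign, signIndicator, mixedIndicator]

lemma ite_groupCondition_false_false (g g' h h' k k' : Bool) :
    (if groupCondition false false g g' h h' k k' then (1 : ℝ) else 0) =
      signIndicator (-1) (boolSign h) * signIndicator (-1) (boolSign h') *
        negativeIndicator (boolSign g) (boolSign g') (boolSign k) (boolSign k') := by
  cases g <;> cases g' <;> cases h <;> cases h' <;> cases k <;> cases k' <;>
    norm_num [groupCondition, boolSign, signIndicator, negativeIndicator]

lemma ite_isGoodPattern {ε : ℝ} {e : Bool} {t : Form → Bool} (hy : t .y = true)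
    (hd : ε * boolSign (t .d) = boolSign e) :
    (if IsGoodPattern e t then (1 : ℝ) else 0) = goodIndicator ε fun i => boolSign (t i) := by
  have hpos : signIndicator ε (boolSign (t .d)) = signIndicator 1 (boolSign e) := by
    rw [signIndicator, hd, signIndicator, one_mul]
  have hneg : signIndicator (-ε) (boolSign (t .d)) = signIndicator (-1) (boolSign e) := by
    rw [signIndicator, neg_mul, hd, signIndicator, neg_one_mul]
  have hand (p q r : Bool) : (if p = false ∧ q = true ∧ r = true then (1 : ℝ) else 0) =
      (if p then 0 else 1) * ((if q then 1 else 0) * if r then 1 else 0) := by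
    cases p <;> cases q <;> cases r <;> simp
  rw [if_congr (isGoodPattern_iff e t) rfl rfl, hand]
  simp only [goodIndicator, hy, hpos, hneg]
  cases e <;> cases t .n
  · rw [ite_groupCondition_false_false, ite_groupCondition_false_false]
    norm_num [boolSign, signIndicator]
    ring
  · rw [ite_groupCondition_false_true, ite_groupCondition_false_true]
    norm_num [boolSign, signIndicator]
    ring
  · rw [ite_groupCondition_true_false, ite_groupCondition_true_false]
    norm_num [boolSign, signIndicator]
    ring
  · norm_num [boolSign, signIndicator]

/-- The nondegeneracy conditions on `x` and `y` under which maximal nonassociativity is decided by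
the squareness of the twisted forms. -/
structure Admissible {F : Type*} [Field F] (x y : F) : Prop where
  isSquare_fst : IsSquare x
  isSquare_snd : IsSquare y
  fst_ne_zero : x ≠ 0
  fst_sub_one_ne_zero : x - 1 ≠ 0
  value_ne_zero : ∀ i, Form.value x y i ≠ 0

namespace Admissible

variable {F : Type*} [Field F] {x y : F}

lemma snd_ne_zero (h : Admissible x y) : y ≠ 0 :=
  h.value_ne_zero .y

lemma sub_ne_zero (h : Admissible x y) : x - y ≠ 0 :=
  h.value_ne_zero .d

lemma assocP_ne_zero (h : Admissible x y) (c₂ c₃ c₄ : Bool) : assocP x y c₂ c₃ c₄ ≠ 0 := by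
  cases c₂ <;> cases c₃ <;> cases c₄ <;>
    simp [assocP, h.fst_ne_zero, h.snd_ne_zero, h.value_ne_zero]

lemma assocS_ne_zero (h : Admissible x y) (c₁ c₂ c₄ : Bool) : assocS x y c₁ c₂ c₄ ≠ 0 := by
  cases c₁ <;> cases c₂ <;> cases c₄ <;>
    simp [assocS, h.fst_ne_zero, h.snd_ne_zero, h.value_ne_zero]

lemma assocT_ne_zero (h : Admissible x y) (c₁ c₃ c₄ : Bool) : assocT x y c₁ c₃ c₄ ≠ 0 := by
  cases c₁ <;> cases c₃ <;> cases c₄ <;>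
    simp [assocT, h.fst_ne_zero, h.snd_ne_zero, h.value_ne_zero]

lemma assocU_ne_zero (h : Admissible x y) (c₁ c₂ c₃ : Bool) : assocU x y c₁ c₂ c₃ ≠ 0 := by
  cases c₁ <;> cases c₂ <;> cases c₃ <;>
    simp [assocU, h.fst_ne_zero, h.snd_ne_zero, h.value_ne_zero, h.fst_sub_one_ne_zero]

lemma isSq_fst (h : Admissible x y) : isSq x = true :=
  decide_eq_true h.isSquare_fst

lemma isSq_snd (h : Admissible x y) : isSq y = true :=
  decide_eq_true h.isSquare_snd

variable [Fintype F]

lemma isSq_assocP (h : Admissible x y) (c₂ c₃ c₄ : Bool) :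
    isSq (assocP x y c₂ c₃ c₄) = patternP (fun i => isSq (Form.twisted x y i)) c₂ c₃ c₄ := by
  cases c₂ <;> cases c₃ <;> cases c₄ <;>
    simp [assocP, patternP, isSq_mul, h.isSq_fst, h.isSq_snd, h.fst_ne_zero, h.snd_ne_zero,
      Form.twisted, Form.twist, isSq_one]

lemma isSq_assocS (h : Admissible x y) (c₁ c₂ c₄ : Bool) :
    isSq (assocS x y c₁ c₂ c₄) = patternS (fun i => isSq (Form.twisted x y i)) c₁ c₂ c₄ := by
  cases c₁ <;> cases c₂ <;> cases c₄ <;>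
    simp [assocS, patternS, isSq_mul, h.isSq_fst, h.isSq_snd, h.fst_ne_zero, h.snd_ne_zero,
      Form.twisted, Form.twist, isSq_one]

lemma isSq_assocT_div (h : Admissible x y) (c₁ c₃ c₄ : Bool) :
    isSq (assocT x y c₁ c₃ c₄ / (x - y)) =
      patternT (fun i => isSq (Form.twisted x y i)) c₁ c₃ c₄ := by
  have hd : isSq (Form.value x y .d) = isSq (x - y) := rfl
  cases c₁ <;> cases c₃ <;> cases c₄ <;>
    simp [assocT, patternT, div_eq_mul_inv, isSq_mul, isSq_inv, h.isSq_fst, h.isSq_snd,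
      h.fst_ne_zero, h.snd_ne_zero, h.value_ne_zero, h.sub_ne_zero, Form.twisted, Form.twist, hd]

lemma isSq_assocU_div (h : Admissible x y) (c₁ c₂ c₃ : Bool) :
    isSq (assocU x y c₁ c₂ c₃ / (x - y)) =
      patternU (isSq ((x - 1) * (x - y))) (fun i => isSq (Form.twisted x y i)) c₁ c₂ c₃ := by
  have hd : isSq (Form.value x y .d) = isSq (x - y) := rfl
  cases c₁ <;> cases c₂ <;> cases c₃ <;>
    simp [assocU, patternU, div_eq_mul_inv, isSq_mul, isSq_inv, h.isSq_fst, h.isSq_snd,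
      h.fst_ne_zero, h.snd_ne_zero, h.value_ne_zero, h.sub_ne_zero, h.fst_sub_one_ne_zero,
      Form.twisted, Form.twist, hd]

lemma realizes_iff (hF : Fintype.card F % 4 = 3) (h : Admissible x y) {z : F} (hz : z ≠ 0)
    (c₁ c₂ c₃ c₄ : Bool) :
    let t := fun i => isSq (Form.twisted x y i)
    Realizes x y z c₁ c₂ c₃ c₄ ↔
      (!(isSq z == patternP t c₂ c₃ c₄)) = c₁ ∧ (isSq z == patternT t c₁ c₃ c₄) = c₂ ∧
        (isSq z == patternS t c₁ c₂ c₄) = c₃ ∧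
        (!(isSq z == patternU (isSq ((x - 1) * (x - y))) t c₁ c₂ c₃)) = c₄ := by
  have hT := div_ne_zero (h.assocT_ne_zero c₁ c₃ c₄) h.sub_ne_zero
  have hU := div_ne_zero (h.assocU_ne_zero c₁ c₂ c₃) h.sub_ne_zero
  rw [Realizes, neg_mul, neg_mul, isSq_neg hF (mul_ne_zero hz (h.assocP_ne_zero _ _ _)),
    isSq_neg hF (mul_ne_zero hz hU), isSq_mul hz (h.assocP_ne_zero _ _ _), isSq_mul hz hT,
    isSq_mul hz (h.assocS_ne_zero _ _ _), isSq_mul hz hU, h.isSq_assocP, h.isSq_assocS,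
    h.isSq_assocT_div, h.isSq_assocU_div]

lemma maxNA_iff_isGoodPattern (hF : Fintype.card F % 4 = 3) (h : Admissible x y) :
    MaxNA (coef x y true) (coef x y false) ↔
      IsGoodPattern (isSq ((x - 1) * (x - y))) fun i => isSq (Form.twisted x y i) := by
  rw [maxNA_coef_iff h.sub_ne_zero h.fst_sub_one_ne_zero (h.value_ne_zero .n) h.assocP_ne_zero
    h.assocS_ne_zero]
  refine ⟨fun hna β c₁ c₂ c₃ c₄ hc => ?_, fun hgood z hz c₁ c₂ c₃ c₄ hc => ?_⟩
  · obtain ⟨z, hz, rfl⟩ : ∃ z : F, z ≠ 0 ∧ isSq z = β := by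
      cases β
      · exact ⟨-1, neg_ne_zero.2 one_ne_zero, isSq_neg_one hF⟩
      · exact ⟨1, one_ne_zero, isSq_one⟩
    exact hna z hz c₁ c₂ c₃ c₄ ((h.realizes_iff hF hz _ _ _ _).2 hc)
  · exact hgood _ c₁ c₂ c₃ c₄ ((h.realizes_iff hF hz _ _ _ _).1 hc)

lemma ite_maxNA (hF : Fintype.card F % 4 = 3) (h : Admissible x y) :
    (if MaxNA (coef x y true) (coef x y false) then (1 : ℝ) else 0) =
      goodIndicator (quadraticChar F (x - 1) : ℤ) (Form.sign x y) := by
  have hsign (i : Form) : Form.sign x y i = boolSign (isSq (Form.twisted x y i)) := by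
    refine quadraticChar_eq_boolSign (mul_ne_zero (h.value_ne_zero i) ?_)
    rcases Form.twist_eq_one_or_eq_value_d x y i with ht | ht <;> rw [ht]
    exacts [one_ne_zero, h.value_ne_zero .d]
  simp only [h.maxNA_iff_isGoodPattern hF]
  rw [show Form.sign x y = fun i => boolSign (isSq (Form.twisted x y i)) from funext hsign]
  refine ite_isGoodPattern ?_ ?_
  · simp [Form.twisted, Form.twist, Form.value, h.isSq_snd]
  · rw [← hsign, ← quadraticChar_eq_boolSign (mul_ne_zero h.fst_sub_one_ne_zero h.sub_ne_zero)]
    rw [map_mul, Int.cast_mul]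
    simp only [Form.sign, Form.twisted, Form.twist, Form.value, mul_one]

end Admissible

end SignPatterns

section Counting

variable {F : Type*} [Field F]

/-- For `x` in `ratios F`, this says that `x = a / b` and `y = (1 - a) / (1 - b)` for a pair
`(a, b)` in `SigSet F` whose quasigroup is maximally nonassociative. -/
def IsMaxNAPair (x y : F) : Prop :=
  y ≠ 0 ∧ y ≠ 1 ∧ y ≠ x ∧ IsSquare y ∧ MaxNA (coef x y true) (coef x y false)

/-- The indicator of `IsMaxNAPair`. -/
def maxNAIndicator (x y : F) : ℝ :=
  if IsMaxNAPair x y then 1 else 0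

lemma maxNAIndicator_nonneg (x y : F) : 0 ≤ maxNAIndicator x y := by
  unfold maxNAIndicator
  split_ifs <;> norm_num

lemma maxNAIndicator_le_one (x y : F) : maxNAIndicator x y ≤ 1 := by
  unfold maxNAIndicator
  split_ifs <;> norm_num

section Coordinates

variable {a b x y : F}

lemma one_sub_coef_true (hxy : x - y ≠ 0) :
    1 - coef x y true = y * (x - 1) / (x - y) := by
  rw [coef, cond_true]
  field_simp
  ring

lemma one_sub_coef_false (hxy : x - y ≠ 0) : 1 - coef x y false = (x - 1) / (x - y) := by
  rw [coef, cond_false]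
  field_simp
  ring

lemma coef_true_eq_mul (x y : F) : coef x y true = x * coef x y false :=
  mul_div_assoc x (1 - y) (x - y)

lemma coef_mem_sigSet (hx : IsSquare x) (hx₀ : x ≠ 0) (hx₁ : x ≠ 1) (hy : IsSquare y)
    (hy₀ : y ≠ 0) (hy₁ : y ≠ 1) (hyx : y ≠ x) : (coef x y true, coef x y false) ∈ SigSet F := by
  have hxy : x - y ≠ 0 := sub_ne_zero.2 hyx.symm
  have hx₁' : x - 1 ≠ 0 := sub_ne_zero.2 hx₁
  have hb₀ : coef x y false ≠ 0 := div_ne_zero (sub_ne_zero.2 hy₁.symm) hxy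
  have hab : coef x y true - coef x y false = (x - 1) * coef x y false := by
    rw [coef_true_eq_mul]
    ring
  refine ⟨?_, ?_, ?_, hb₀, ?_, ?_, ?_⟩
  · exact sub_ne_zero.1 (hab ▸ mul_ne_zero hx₁' hb₀)
  · exact coef_true_eq_mul x y ▸ mul_ne_zero hx₀ hb₀
  · refine (sub_ne_zero.1 ?_).symm
    rw [one_sub_coef_true hxy]
    exact div_ne_zero (mul_ne_zero hy₀ hx₁') hxy
  · refine (sub_ne_zero.1 ?_).symm
    rw [one_sub_coef_false hxy]
    exact div_ne_zero hx₁' hxy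
  · rw [coef_true_eq_mul, mul_assoc]
    exact hx.mul (.mul_self _)
  · rw [one_sub_coef_true hxy, one_sub_coef_false hxy, mul_div_assoc, mul_assoc]
    exact hy.mul (.mul_self _)

lemma coef_true_div_coef_false (hxy : x - y ≠ 0) (hy : 1 - y ≠ 0) :
    coef x y true / coef x y false = x := by
  rw [coef_true_eq_mul, mul_div_cancel_right₀]
  exact div_ne_zero hy hxy

lemma one_sub_coef_true_div (hxy : x - y ≠ 0) (hx : x - 1 ≠ 0) :
    (1 - coef x y true) / (1 - coef x y false) = y := by
  rw [one_sub_coef_true hxy, one_sub_coef_false hxy, mul_div_assoc, mul_div_cancel_right₀]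
  exact div_ne_zero hx hxy

lemma div_sub_one_sub_div (hb₀ : b ≠ 0) (hb₁ : 1 - b ≠ 0) :
    a / b - (1 - a) / (1 - b) = (a - b) / (b * (1 - b)) := by
  field_simp
  ring

lemma coef_div_true (hab : a - b ≠ 0) (hb₀ : b ≠ 0) (hb₁ : 1 - b ≠ 0) :
    coef (a / b) ((1 - a) / (1 - b)) true = a := by
  rw [coef, cond_true, div_sub_one_sub_div hb₀ hb₁]
  field_simp
  ring

lemma coef_div_false (hab : a - b ≠ 0) (hb₀ : b ≠ 0) (hb₁ : 1 - b ≠ 0) :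
    coef (a / b) ((1 - a) / (1 - b)) false = b := by
  rw [coef, cond_false, div_sub_one_sub_div hb₀ hb₁]
  field_simp
  ring

end Coordinates

variable [Fintype F]

lemma maxNAIndicator_eq_goodIndicator (hF : Fintype.card F % 4 = 3) {x y : F} (hx : IsSquare x)
    (hx₀ : x ≠ 0) (hx₁ : x - 1 ≠ 0) (hxy : ∀ i, Form.value x y i ≠ 0) :
    maxNAIndicator x y = goodIndicator (quadraticChar F (x - 1) : ℤ) (Form.sign x y) := by
  have hy₀ : y ≠ 0 := hxy .y
  have hy₁ : y ≠ 1 := (sub_ne_zero.1 (hxy .n)).symm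
  have hyx : y ≠ x := (sub_ne_zero.1 (hxy .d)).symm
  by_cases hy : IsSquare y
  · rw [← Admissible.ite_maxNA hF ⟨hx, hy, hx₀, hx₁, hxy⟩]
    simp [maxNAIndicator, IsMaxNAPair, hy₀, hy₁, hyx, hy]
  · have hsign : Form.sign x y .y = -1 := by
      have h : Form.sign x y .y = (quadraticChar F y : ℤ) := by
        simp only [Form.sign, Form.twisted, Form.twist, Form.value, mul_one]
      rw [h, quadraticChar_eq_boolSign hy₀]
      simp [isSq, hy, boolSign]
    simp [maxNAIndicator, IsMaxNAPair, goodIndicator, hy, hsign, signIndicator]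

lemma abs_quadraticChar_eq_one {z : F} (hz : z ≠ 0) : |((quadraticChar F z : ℤ) : ℝ)| = 1 := by
  rcases quadraticChar_dichotomy hz with h | h <;> simp [h]

lemma abs_sum_maxNAIndicator_sub_sum_goodIndicator_le (hF : Fintype.card F % 4 = 3) {x : F}
    (hx : IsSquare x) (hx₀ : x ≠ 0) (hx₁ : x - 1 ≠ 0) (hgen : Form.Generic x) :
    |∑ y, maxNAIndicator x y -
      ∑ y, goodIndicator (quadraticChar F (x - 1) : ℤ) (Form.sign x y)| ≤
        21 * (1 + 737 / 64) := by
  rw [← Finset.sum_sub_distrib]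
  calc |∑ y, (maxNAIndicator x y - goodIndicator (quadraticChar F (x - 1) : ℤ) (Form.sign x y))|
      ≤ ∑ y, if ∃ i, Form.value x y i = 0 then (1 + 737 / 64 : ℝ) else 0 := by
        refine (Finset.abs_sum_le_sum_abs _ _).trans (Finset.sum_le_sum fun y _ => ?_)
        split_ifs with h
        · refine (abs_sub _ _).trans (add_le_add ?_ ?_)
          · rw [abs_of_nonneg (maxNAIndicator_nonneg x y)]
            exact maxNAIndicator_le_one x y
          · exact abs_goodIndicator_le (abs_quadraticChar_eq_one hx₁) (Form.abs_sign_le_one x y)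
        · rw [maxNAIndicator_eq_goodIndicator hF hx hx₀ hx₁ (not_exists.1 h), sub_self, abs_zero]
    _ = (Finset.univ.filter fun y => ∃ i, Form.value x y i = 0).card * (1 + 737 / 64) := by
        rw [← Finset.sum_filter, Finset.sum_const, nsmul_eq_mul]
    _ ≤ 21 * (1 + 737 / 64) := by
        gcongr
        exact_mod_cast Form.card_value_eq_zero_le hgen

lemma ringChar_ne_two (hF : Fintype.card F % 4 = 3) : ringChar F ≠ 2 := fun h => by
  have := FiniteField.even_card_of_char_two h
  lia

lemma abs_sum_maxNAIndicator_sub_le (hF : Fintype.card F % 4 = 3) {x : F} (hx : IsSquare x)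
    (hx₀ : x ≠ 0) (hx₁ : x - 1 ≠ 0) (hgen : Form.Generic x) :
    |∑ y, maxNAIndicator x y - 825 / 32768 * Fintype.card F| ≤
      21 * (1 + 737 / 64) + 265 * √(Fintype.card F) :=
  (abs_sub_le _ _ _).trans <| add_le_add
    (abs_sum_maxNAIndicator_sub_sum_goodIndicator_le hF hx hx₀ hx₁ hgen)
    (abs_sum_goodIndicator_sub_le (ringChar_ne_two hF) hgen (abs_quadraticChar_eq_one hx₁))

lemma abs_sum_maxNAIndicator_sub_le_card (x : F) :
    |∑ y, maxNAIndicator x y - 825 / 32768 * Fintype.card F| ≤ Fintype.card F := by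
  have h₀ : 0 ≤ ∑ y, maxNAIndicator x y :=
    Finset.sum_nonneg fun y _ => maxNAIndicator_nonneg x y
  have h₁ : ∑ y, maxNAIndicator x y ≤ Fintype.card F := by
    simpa using Finset.sum_le_sum fun y (_ : y ∈ Finset.univ) => maxNAIndicator_le_one x y
  rw [abs_le]
  constructor <;> linarith

/-- The possible values of `a / b` for `(a, b)` in `SigSet F`. -/
def ratios (F : Type*) [Field F] [Fintype F] : Finset F :=
  {x | x ≠ 0 ∧ x ≠ 1 ∧ IsSquare x}

lemma mem_ratios {x : F} : x ∈ ratios F ↔ x ≠ 0 ∧ x ≠ 1 ∧ IsSquare x := by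
  simp [ratios]

lemma card_ratios (hchar : ringChar F ≠ 2) :
    ((ratios F).card : ℝ) = (Fintype.card F : ℝ) / 2 - 3 / 2 := by
  have hsum : ∑ x : F, ((quadraticChar F x : ℤ) : ℝ) = 0 := by
    exact_mod_cast quadraticChar_sum_zero hchar
  have hite (x : F) : (if x ≠ 0 ∧ x ≠ 1 ∧ IsSquare x then (1 : ℝ) else 0) =
      1 / 2 + (quadraticChar F x : ℤ) / 2 - (if x = 0 then 1 / 2 else 0) -
        (if x = 1 then 1 else 0) := by
    rcases eq_or_ne x 0 with rfl | hx₀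
    · simp
    rcases eq_or_ne x 1 with rfl | hx₁
    · norm_num
    rw [quadraticChar_eq_boolSign hx₀]
    by_cases hx : IsSquare x <;> norm_num [hx₀, hx₁, hx, isSq, boolSign]
  rw [ratios, Finset.card_filter]
  push_cast
  simp only [hite, Finset.sum_sub_distrib, Finset.sum_add_distrib, ← Finset.sum_div, hsum]
  simp
  ring

lemma bijOn_coef :
    Set.BijOn (fun p : F × F => (coef p.1 p.2 true, coef p.1 p.2 false))
      {p | p.1 ∈ ratios F ∧ IsMaxNAPair p.1 p.2} {p | p ∈ SigSet F ∧ MaxNA p.1 p.2} := by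
  refine Set.InvOn.bijOn (f' := fun p => (p.1 / p.2, (1 - p.1) / (1 - p.2))) ⟨?_, ?_⟩ ?_ ?_
  · rintro ⟨x, y⟩ ⟨hx, -, hy₁, hyx, -⟩
    have hxy : x - y ≠ 0 := sub_ne_zero.2 hyx.symm
    exact Prod.ext (coef_true_div_coef_false hxy (sub_ne_zero.2 hy₁.symm))
      (one_sub_coef_true_div hxy (sub_ne_zero.2 (mem_ratios.1 hx).2.1))
  · rintro ⟨a, b⟩ ⟨⟨hab, -, -, hb₀, hb₁, -⟩, -⟩
    have hab' := sub_ne_zero.2 hab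
    have hb₁' := sub_ne_zero.2 hb₁.symm
    exact Prod.ext (coef_div_true hab' hb₀ hb₁') (coef_div_false hab' hb₀ hb₁')
  · rintro ⟨x, y⟩ ⟨hx, hy₀, hy₁, hyx, hy, hna⟩
    obtain ⟨hx₀, hx₁, hx⟩ := mem_ratios.1 hx
    exact ⟨coef_mem_sigSet hx hx₀ hx₁ hy hy₀ hy₁ hyx, hna⟩
  · rintro ⟨a, b⟩ ⟨⟨hab, ha₀, ha₁, hb₀, hb₁, hsq, hsq'⟩, hna⟩
    have hab' := sub_ne_zero.2 hab
    have ha₁' := sub_ne_zero.2 ha₁.symm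
    have hb₁' := sub_ne_zero.2 hb₁.symm
    simp only [Set.mem_ofPred_eq, mem_ratios, IsMaxNAPair]
    rw [coef_div_true hab' hb₀ hb₁', coef_div_false hab' hb₀ hb₁']
    refine ⟨⟨div_ne_zero ha₀ hb₀, ?_, ?_⟩, div_ne_zero ha₁' hb₁', ?_, ?_, ?_, hna⟩
    · rwa [Ne, div_eq_one_iff_eq hb₀]
    · rw [← mul_div_mul_right a b hb₀]
      exact hsq.div (.mul_self b)
    · rw [Ne, div_eq_one_iff_eq hb₁']
      exact fun h => hab (sub_right_injective h)
    · refine (sub_ne_zero.1 ?_).symm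
      rw [div_sub_one_sub_div hb₀ hb₁']
      exact div_ne_zero hab' (mul_ne_zero hb₀ hb₁')
    · rw [← mul_div_mul_right (1 - a) (1 - b) hb₁']
      exact hsq'.div (.mul_self (1 - b))

lemma sigmaCount_eq_sum : (sigmaCount F : ℝ) = ∑ x ∈ ratios F, ∑ y, maxNAIndicator x y := by
  have hset : {p : F × F | p.1 ∈ ratios F ∧ IsMaxNAPair p.1 p.2} =
      ↑((ratios F ×ˢ Finset.univ).filter fun p => IsMaxNAPair p.1 p.2) := by
    ext p
    simp
  rw [sigmaCount, ← bijOn_coef.image_eq, bijOn_coef.injOn.ncard_image, hset,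
    Set.ncard_coe_finset, Finset.card_filter, Finset.sum_product]
  simp only [Nat.cast_sum, Nat.cast_ite, Nat.cast_one, Nat.cast_zero, maxNAIndicator]

lemma abs_sigmaCount_sub_card_mul_le (hF : Fintype.card F % 4 = 3) :
    |(sigmaCount F : ℝ) - (ratios F).card * (825 / 32768 * Fintype.card F)| ≤
      (ratios F).card * (21 * (1 + 737 / 64) + 265 * √(Fintype.card F)) +
        93 * Fintype.card F := by
  rw [sigmaCount_eq_sum, ← nsmul_eq_mul, ← Finset.sum_const, ← Finset.sum_sub_distrib]
  calc |∑ x ∈ ratios F, (∑ y, maxNAIndicator x y - 825 / 32768 * Fintype.card F)|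
      ≤ ∑ x ∈ ratios F, (21 * (1 + 737 / 64) + 265 * √(Fintype.card F) +
          if ¬Form.Generic x then (Fintype.card F : ℝ) else 0) := by
        refine (Finset.abs_sum_le_sum_abs _ _).trans (Finset.sum_le_sum fun x hx => ?_)
        obtain ⟨hx₀, hx₁, hx⟩ := mem_ratios.1 hx
        split_ifs with hgen
        · rw [add_zero]
          exact abs_sum_maxNAIndicator_sub_le hF hx hx₀ (sub_ne_zero.2 hx₁) hgen
        · exact (abs_sum_maxNAIndicator_sub_le_card x).trans
            (le_add_of_nonneg_left (by positivity))
    _ = (ratios F).card * (21 * (1 + 737 / 64) + 265 * √(Fintype.card F)) +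
          ((ratios F).filter fun x => ¬Form.Generic x).card * Fintype.card F := by
        simp only [Finset.sum_add_distrib, ← Finset.sum_filter, Finset.sum_const, nsmul_eq_mul]
        ring
    _ ≤ (ratios F).card * (21 * (1 + 737 / 64) + 265 * √(Fintype.card F)) +
          93 * Fintype.card F := by
        gcongr
        exact_mod_cast (Finset.card_le_card
          (Finset.filter_subset_filter _ (Finset.subset_univ _))).trans
            (Form.card_not_generic_le (ringChar_ne_two hF))

end Counting

/-- Theorem 4.6: for `q ≡ 3 (mod 4)`,
`|σ(q) - 25(2⁻¹¹ + 2⁻¹⁶)q²| < 138·q^{3/2} + 235·q`. -/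
theorem sigma_estimate_three_mod_four (F : Type*) [Field F] [Fintype F]
    (q : ℕ) (hq : Fintype.card F = q) (h3 : q % 4 = 3) :
    |(sigmaCount F : ℝ) - 25 * ((2 : ℝ) ^ (-11 : ℤ) + (2 : ℝ) ^ (-16 : ℤ)) * (q : ℝ) ^ 2|
      < 138 * (q : ℝ) ^ ((3 : ℝ) / 2) + 235 * (q : ℝ) := by
  subst hq
  have hq : (0 : ℝ) < Fintype.card F := mod_cast Fintype.card_pos
  have hmean : 25 * ((2 : ℝ) ^ (-11 : ℤ) + (2 : ℝ) ^ (-16 : ℤ)) = 825 / 65536 := by norm_num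
  have hpow : (Fintype.card F : ℝ) ^ ((3 : ℝ) / 2) = Fintype.card F * √(Fintype.card F) := by
    rw [Real.sqrt_eq_rpow, ← Real.rpow_one_add' hq.le (by norm_num)]
    norm_num
  have : 0 < Fintype.card F * √(Fintype.card F : ℝ) := by positivity
  have : 0 < √(Fintype.card F : ℝ) := by positivity
  have hcount := abs_le.1 (abs_sigmaCount_sub_card_mul_le h3)
  rw [card_ratios (ringChar_ne_two h3)] at hcount
  rw [hmean, hpow, abs_lt]
  constructor <;> linarith
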